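/- (Theorem 21) Let 0 < θ₁ < 1, 0 ≤ θ < 1, 0 < q₁, r₁, r ≤ ∞, a, a₁, b₁ ∈ SV, and ‖s^{-1/r₁} b₁(s)/a₁(s)‖_{r₁,(0,1)} < ∞; if θ = 0 assume additionally ‖s^{-1/r} a(s)‖_{r,(1,∞)} < ∞. Put c₁(t) = a₁(t) ‖s^{-1/r₁} b₁(s)/a₁(s)‖_{r₁,(0,t)} and ρ(t) = t^{θ₁}/c₁(t). Then (A₀, Ā^𝓡_{θ₁,r₁,b₁,q₁,a₁})_{θ,r;a} ≅ Ā_{η,r;a^#}, where η = θθ₁ and a^#(t) = c₁(t)^θ a(ρ(t)). -/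

import Mathlib

open MeasureTheory Set ENNReal Filter

noncomputable section

/-- The `L_q` quasi-norm (with respect to Lebesgue measure) of an `ℝ≥0∞`-valued
function over a set of reals; for `q = ∞` it is the essential supremum. -/
def LqNorm (q : ℝ≥0∞) (s : Set ℝ) (g : ℝ → ℝ≥0∞) : ℝ≥0∞ :=
  if q = ∞ then essSup g (volume.restrict s)
  else (∫⁻ t in s, g t ^ q.toReal) ^ q⁻¹.toReal

/-- The weight `s ↦ s ^ (-1/r) * b s`, as an `ℝ≥0∞`-valued function
(`1/∞ = 0` by convention). -/
def svWgt (r : ℝ≥0∞) (b : ℝ → ℝ) : ℝ → ℝ≥0∞ :=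
  fun s => ENNReal.ofReal (s ^ (-(r⁻¹.toReal)) * b s)

/-- `f` and `g` are equivalent on `s`: each is bounded by a constant multiple
of the other there. -/
def EquivOn (s : Set ℝ) (f g : ℝ → ℝ) : Prop :=
  ∃ C : ℝ, 0 < C ∧ ∀ t ∈ s, C⁻¹ * g t ≤ f t ∧ f t ≤ C * g t

/-- A positive measurable function `b` on `(0,∞)` is slowly varying if for every
`ε > 0`, `t ^ ε * b t` is equivalent to a non-decreasing function and
`t ^ (-ε) * b t` is equivalent to a non-increasing function. -/
def SlowlyVarying (b : ℝ → ℝ) : Prop :=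
  AEMeasurable b (volume.restrict (Ioi 0)) ∧ (∀ t ∈ Ioi (0:ℝ), 0 < b t) ∧
    ∀ ε : ℝ, 0 < ε →
      (∃ g : ℝ → ℝ, MonotoneOn g (Ioi 0) ∧ EquivOn (Ioi 0) (fun t => t ^ ε * b t) g) ∧
      (∃ g : ℝ → ℝ, AntitoneOn g (Ioi 0) ∧ EquivOn (Ioi 0) (fun t => t ^ (-ε) * b t) g)

/-- A quasi-Banach space continuously embedded into the ambient (Hausdorff) space `E`,
recorded via its extended-real-valued quasi-norm; the space itself is the set of
vectors of finite quasi-norm. -/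
structure QuasiBanach (E : Type*) [AddCommGroup E] [Module ℝ E] where
  N : E → ℝ≥0∞
  zero : N 0 = 0
  definite : ∀ x, N x = 0 → x = 0
  smul : ∀ (c : ℝ) (x : E), N (c • x) = ENNReal.ofReal |c| * N x
  quasi : ∃ C : ℝ≥0∞, 1 ≤ C ∧ C ≠ ∞ ∧ ∀ x y, N (x + y) ≤ C * (N x + N y)
  complete : ∀ f : ℕ → E,
    (∀ ε : ℝ≥0∞, 0 < ε → ∃ M : ℕ, ∀ m ≥ M, ∀ n ≥ M, N (f m - f n) < ε) →
    (∀ n, N (f n) ≠ ∞) →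
    ∃ g : E, N g ≠ ∞ ∧ Tendsto (fun n => N (f n - g)) atTop (nhds 0)

variable {E : Type*} [AddCommGroup E] [Module ℝ E]

/-- The Peetre K-functional of the couple whose quasi-norms are `N₀`, `N₁`. -/
def Kf (N₀ N₁ : E → ℝ≥0∞) (t : ℝ) (f : E) : ℝ≥0∞ :=
  ⨅ g : E, N₀ g + ENNReal.ofReal t * N₁ (f - g)

/-- The quasi-norm of the real interpolation space `Ā_{θ,q;b}`. -/
def normK (N₀ N₁ : E → ℝ≥0∞) (θ : ℝ) (q : ℝ≥0∞) (b : ℝ → ℝ) (f : E) : ℝ≥0∞ :=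
  LqNorm q (Ioi 0) fun u =>
    ENNReal.ofReal (u ^ (-θ - q⁻¹.toReal) * b u) * Kf N₀ N₁ u f

/-- The quasi-norm of the limiting interpolation space `Ā^𝓛_{σ,r,b,q,a}`. -/
def normL (N₀ N₁ : E → ℝ≥0∞) (σ : ℝ) (r q : ℝ≥0∞) (b a : ℝ → ℝ) (f : E) : ℝ≥0∞ :=
  LqNorm r (Ioi 0) fun t =>
    ENNReal.ofReal (t ^ (-(r⁻¹.toReal)) * (b t / a t)) *
      LqNorm q (Ioo 0 t) fun u =>
        ENNReal.ofReal (u ^ (-σ - q⁻¹.toReal) * a u) * Kf N₀ N₁ u f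

/-- The quasi-norm of the limiting interpolation space `Ā^𝓡_{σ,r,b,q,a}`. -/
def normR (N₀ N₁ : E → ℝ≥0∞) (σ : ℝ) (r q : ℝ≥0∞) (b a : ℝ → ℝ) (f : E) : ℝ≥0∞ :=
  LqNorm r (Ioi 0) fun t =>
    ENNReal.ofReal (t ^ (-(r⁻¹.toReal)) * (b t / a t)) *
      LqNorm q (Ioi t) fun u =>
        ENNReal.ofReal (u ^ (-σ - q⁻¹.toReal) * a u) * Kf N₀ N₁ u f

/-- Two (extended-real-valued) quasi-norms define the same space with
equivalent quasi-norms. -/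
def EquivNorms (nX nY : E → ℝ≥0∞) : Prop :=
  ∃ C : ℝ≥0∞, 0 < C ∧ C ≠ ∞ ∧ ∀ f : E, C⁻¹ * nY f ≤ nX f ∧ nX f ≤ C * nY f

/-!
Put `B(t) = ‖s^{-1/r₁} b₁(s)/a₁(s)‖_{r₁,(0,t)}` and write `𝓡` for the `𝓡`-space of the statement.
The argument rests on a one-sided version of Holmstedt's formula. On the one hand `K(t, f; A₀, A₁)`
is at most a constant times `K(ρ(t), f; A₀, 𝓡)`: as `K(·, g; A₀, A₁)` increases, the norm of `g` in
`𝓡` dominates `t^{-θ₁} a₁(t) B(t) K(t, g; A₀, A₁)`, whose coefficient is `1 / ρ(t)`. On the other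
hand, an almost optimal decomposition of `f` at `t` shows that, for small `ε > 0`, the functional
`K(ρ(t), f; A₀, 𝓡)` is at most a constant times the supremum over `u ≥ t` of
`(u / t)^ε (ρ(t) / ρ(u)) K(u, f; A₀, A₁)`. As `ρ` varies regularly with index `θ₁` and `θ < 1`,
multiplication with the outer weight `ρ(t)^{-θ} a(ρ(t))` leaves a kernel which decays like a power
of `t / u`.

The change of variables `t ↦ ρ(t)` and the estimate of that supremum are both carried out on a
logarithmic scale: K-functionals and all weights change by a bounded factor when `log t` moves by
at most `1`, so the `L_r` norms may be replaced by `ℓ_r` norms over `t = e^k`, `k ∈ ℤ`. There `k`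
and `⌈log ρ(e^k)⌉` correspond up to boundedly many repetitions, and a kernel with exponential decay
acts boundedly for every `r > 0`.
-/

section LpNorm

variable {α : Type*} [MeasurableSpace α]

lemma eLpNorm_mono_on {s : Set α} (hs : MeasurableSet s) {f g : α → ℝ≥0∞}
    (h : ∀ x ∈ s, f x ≤ g x) (p : ℝ≥0∞) (μ : Measure α) :
    eLpNorm f p (μ.restrict s) ≤ eLpNorm g p (μ.restrict s) :=
  eLpNorm_mono_enorm_ae <| (ae_restrict_iff' hs).2 <| ae_of_all _ fun x hx => by simpa using h x hx

lemma eLpNorm_const_mul_le_of_ne_top {c : ℝ≥0∞} (hc : c ≠ ∞) (g : α → ℝ≥0∞) (p : ℝ≥0∞)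
    (μ : Measure α) : eLpNorm (fun x => c * g x) p μ ≤ c * eLpNorm g p μ := by
  lift c to NNReal using hc
  exact eLpNorm_le_mul_eLpNorm_of_ae_le_mul' (ae_of_all _ fun x => by simp) p

lemma const_mul_eLpNorm_le (c : ℝ≥0∞) (g : α → ℝ≥0∞) (p : ℝ≥0∞) (μ : Measure α) :
    c * eLpNorm g p μ ≤ eLpNorm (fun x => c * g x) p μ := by
  rcases eq_or_ne p 0 with rfl | hp
  · simp
  rcases eq_or_ne p ∞ with rfl | hp'
  · simp only [eLpNorm_exponent_top, eLpNormEssSup, enorm_eq_self]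
    exact ENNReal.essSup_const_mul.ge
  have hpos : 0 < p.toReal := ENNReal.toReal_pos hp hp'
  simp only [eLpNorm_eq_lintegral_rpow_enorm_toReal hp hp', enorm_eq_self,
    ENNReal.mul_rpow_of_nonneg _ _ hpos.le]
  calc c * (∫⁻ x, g x ^ p.toReal ∂μ) ^ (1 / p.toReal)
      = (c ^ p.toReal * ∫⁻ x, g x ^ p.toReal ∂μ) ^ (1 / p.toReal) := by
        rw [ENNReal.mul_rpow_of_nonneg _ _ (by positivity), one_div,
          ENNReal.rpow_rpow_inv hpos.ne']
    _ ≤ (∫⁻ x, c ^ p.toReal * g x ^ p.toReal ∂μ) ^ (1 / p.toReal) := by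
        gcongr
        exact lintegral_const_mul_le _ _

lemma eLpNorm_le_const_mul_on {s : Set α} (hs : MeasurableSet s) {f g : α → ℝ≥0∞} {c : ℝ≥0∞}
    (hc : c ≠ ∞) (h : ∀ x ∈ s, f x ≤ c * g x) (p : ℝ≥0∞) (μ : Measure α) :
    eLpNorm f p (μ.restrict s) ≤ c * eLpNorm g p (μ.restrict s) :=
  (eLpNorm_mono_on hs h p μ).trans (eLpNorm_const_mul_le_of_ne_top hc g p _)

lemma eLpNorm_add_measure_le (g : α → ℝ≥0∞) (p : ℝ≥0∞) (μ ν : Measure α) :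
    eLpNorm g p (μ + ν) ≤ 2 ^ p⁻¹.toReal * (eLpNorm g p μ + eLpNorm g p ν) := by
  rcases eq_or_ne p 0 with rfl | hp
  · simp
  rcases eq_or_ne p ∞ with rfl | hp'
  · simp only [inv_top, toReal_zero, ENNReal.rpow_zero, one_mul, eLpNorm_exponent_top]
    refine eLpNormEssSup_le_of_ae_enorm_bound (ae_add_measure_iff.2 ⟨?_, ?_⟩)
    · exact ae_le_eLpNormEssSup.mono fun x hx => hx.trans le_self_add
    · exact ae_le_eLpNormEssSup.mono fun x hx => hx.trans le_add_self
  have hpos : 0 < p.toReal := ENNReal.toReal_pos hp hp'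
  simp only [eLpNorm_eq_lintegral_rpow_enorm_toReal hp hp', lintegral_add_measure, one_div,
    ENNReal.toReal_inv, ENNReal.rpow_inv_le_iff hpos, ENNReal.mul_rpow_of_nonneg _ _ hpos.le,
    ENNReal.rpow_inv_rpow hpos.ne', two_mul]
  exact add_le_add ((ENNReal.rpow_inv_le_iff hpos).1 le_self_add)
    ((ENNReal.rpow_inv_le_iff hpos).1 le_add_self)

lemma eLpNorm_restrict_union_le (g : α → ℝ≥0∞) (p : ℝ≥0∞) (μ : Measure α) (s t : Set α) :
    eLpNorm g p (μ.restrict (s ∪ t)) ≤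
      2 ^ p⁻¹.toReal * (eLpNorm g p (μ.restrict s) + eLpNorm g p (μ.restrict t)) :=
  (eLpNorm_mono_measure g (Measure.restrict_union_le s t)).trans (eLpNorm_add_measure_le g p _ _)

lemma eLpNorm_iSup_kernel_mul_le {ι κ : Type*} [MeasurableSpace ι] [MeasurableSingletonClass ι]
    [MeasurableSpace κ] [MeasurableSingletonClass κ] {r M : ℝ≥0∞} (w : κ → ι → ℝ≥0∞)
    (hw : ∀ i, eLpNorm (fun k => w k i) r Measure.count ≤ M) (y : ι → ℝ≥0∞) :
    eLpNorm (fun k => ⨆ i, w k i * y i) r Measure.count ≤ M * eLpNorm y r Measure.count := by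
  rcases eq_or_ne r 0 with rfl | hr
  · simp
  rcases eq_or_ne r ∞ with rfl | hr'
  · simp only [eLpNorm_exponent_top, eLpNormEssSup, essSup_count, enorm_eq_self] at hw ⊢
    exact iSup_le fun k => iSup_le fun i =>
      mul_le_mul' ((le_iSup (fun k => w k i) k).trans (hw i)) (le_iSup y i)
  have hpos : 0 < r.toReal := ENNReal.toReal_pos hr hr'
  simp only [eLpNorm_eq_lintegral_rpow_enorm_toReal hr hr', enorm_eq_self, lintegral_count,
    one_div, ENNReal.rpow_inv_le_iff hpos] at hw ⊢
  rw [ENNReal.mul_rpow_of_nonneg _ _ hpos.le, ENNReal.rpow_inv_rpow hpos.ne']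
  calc ∑' k, (⨆ i, w k i * y i) ^ r.toReal
      ≤ ∑' k, ∑' i, w k i ^ r.toReal * y i ^ r.toReal := by
        refine ENNReal.tsum_le_tsum fun k => (ENNReal.le_rpow_inv_iff hpos).1 <| iSup_le fun i => ?_
        rw [ENNReal.le_rpow_inv_iff hpos, ENNReal.mul_rpow_of_nonneg _ _ hpos.le]
        exact ENNReal.le_tsum i
    _ = ∑' i, (∑' k, w k i ^ r.toReal) * y i ^ r.toReal := by
        rw [ENNReal.tsum_comm]
        simp only [ENNReal.tsum_mul_right]
    _ ≤ M ^ r.toReal * ∑' i, y i ^ r.toReal := by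
        rw [← ENNReal.tsum_mul_left]
        exact ENNReal.tsum_le_tsum fun i => mul_le_mul_left (hw i) _

lemma eLpNorm_count_comp_le {J : ℤ → ℤ} {N : ℕ} (hJ : ∀ i j, J i = J j → |i - j| ≤ N)
    (y : ℤ → ℝ≥0∞) (r : ℝ≥0∞) :
    eLpNorm (fun i => y (J i)) r Measure.count ≤
      (2 * N + 1 : ℝ≥0∞) ^ r⁻¹.toReal * eLpNorm y r Measure.count := by
  have card_fibre (j : ℤ) : Measure.count {i | J i = j} ≤ (2 * N + 1 : ℝ≥0∞) := by
    rcases Set.eq_empty_or_nonempty {i | J i = j} with h | ⟨i₀, hi₀⟩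
    · simp [h]
    calc Measure.count {i | J i = j} ≤ Measure.count (Finset.Icc (i₀ - N) (i₀ + N) : Set ℤ) := by
          refine measure_mono fun i hi => ?_
          have := abs_le.1 (hJ i i₀ (hi.trans hi₀.symm))
          simp only [Finset.coe_Icc, Set.mem_Icc]
          omega
      _ = 2 * N + 1 := by
          rw [Measure.count_apply_finset, Int.card_Icc,
            show (i₀ + N + 1 - (i₀ - N)).toNat = 2 * N + 1 by omega]
          push_cast
          rfl
  refine le_trans (eLpNorm_mono_enorm fun i => ?_)
    (eLpNorm_iSup_kernel_mul_le (fun i => Pi.single (J i) (1 : ℝ≥0∞)) (fun j => ?_) y)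
  · simpa using le_iSup (fun j => Pi.single (M := fun _ => ℝ≥0∞) (J i) 1 j * y j) (J i)
  · have indicator_eq : (fun i => Pi.single (M := fun _ => ℝ≥0∞) (J i) 1 j) =
        {i | J i = j}.indicator fun _ => (1 : ℝ≥0∞) := by
      ext i
      simp [Pi.single_apply, Set.indicator_apply, eq_comm]
    rw [indicator_eq]
    refine (eLpNorm_indicator_const_le _ _).trans ?_
    rw [enorm_eq_self, one_mul, one_div, ← ENNReal.toReal_inv]
    gcongr
    exact card_fibre j

end LpNorm

/-- The measure `du / u` on `(0, ∞)`, carried by the whole line. With respect to it the weights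
`u ^ (-1 / q)` of the norms above disappear, for `q = ∞` as well. -/
def logMeasure : Measure ℝ :=
  (volume.restrict (Ioi 0)).withDensity fun u => ENNReal.ofReal u⁻¹

section LogMeasure

lemma measurable_ofReal_inv : Measurable fun u : ℝ => ENNReal.ofReal u⁻¹ := by fun_prop

lemma logMeasure_restrict {s : Set ℝ} (hs : MeasurableSet s) (hs' : s ⊆ Ioi 0) :
    logMeasure.restrict s = (volume.restrict s).withDensity fun u => ENNReal.ofReal u⁻¹ := by
  rw [logMeasure, restrict_withDensity hs, Measure.restrict_restrict hs, inter_eq_left.2 hs']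

lemma logMeasure_restrict_Ioi_zero : logMeasure.restrict (Ioi 0) = logMeasure :=
  logMeasure_restrict measurableSet_Ioi subset_rfl

lemma LqNorm_eq_eLpNorm_logMeasure {q : ℝ≥0∞} (hq : q ≠ 0) {s : Set ℝ} (hs : MeasurableSet s)
    (hs' : s ⊆ Ioi 0) {g F : ℝ → ℝ≥0∞}
    (h : ∀ u ∈ s, g u = ENNReal.ofReal (u ^ (-q⁻¹.toReal)) * F u) :
    LqNorm q s g = eLpNorm F q (logMeasure.restrict s) := by
  rw [LqNorm, logMeasure_restrict hs hs']
  split_ifs with hq'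
  · subst hq'
    have ae_iff : ae ((volume.restrict s).withDensity fun u => ENNReal.ofReal u⁻¹) =
        ae (volume.restrict s) := by
      refine (withDensity_absolutelyContinuous _ _).ae_le.antisymm
        (withDensity_absolutelyContinuous' measurable_ofReal_inv.aemeasurable ?_).ae_le
      filter_upwards [ae_restrict_mem hs] with u hu
      simpa using hs' hu
    rw [eLpNorm_exponent_top, eLpNormEssSup, essSup, essSup, ae_iff]
    refine limsup_congr <| (ae_restrict_mem hs).mono fun u hu => ?_
    simpa using h u hu
  · have hpos : 0 < q.toReal := ENNReal.toReal_pos hq hq'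
    rw [eLpNorm_eq_lintegral_rpow_enorm_toReal hq hq', ENNReal.toReal_inv, one_div,
      lintegral_withDensity_eq_lintegral_mul_non_measurable _ measurable_ofReal_inv
        (ae_of_all _ fun _ => ENNReal.ofReal_lt_top)]
    congr 1
    refine setLIntegral_congr_fun hs fun u hu => ?_
    have hu' : 0 < u := hs' hu
    rw [Pi.mul_apply, enorm_eq_self, h u hu, ENNReal.mul_rpow_of_nonneg _ _ hpos.le,
      ENNReal.ofReal_rpow_of_pos (by positivity), ← Real.rpow_mul hu'.le, ENNReal.toReal_inv,
      neg_mul, inv_mul_cancel₀ hpos.ne', Real.rpow_neg_one]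

lemma logMeasure_Ioc_mul {t l : ℝ} (ht : 0 < t) (hl : 1 ≤ l) :
    logMeasure (Ioc t (l * t)) = ENNReal.ofReal (Real.log l) := by
  have hle : t ≤ l * t := le_mul_of_one_le_left ht.le hl
  rw [← Measure.restrict_apply_univ, logMeasure_restrict measurableSet_Ioc
    (fun u hu => ht.trans hu.1), withDensity_apply _ MeasurableSet.univ, Measure.restrict_univ,
    ← ofReal_integral_eq_lintegral_ofReal, ← intervalIntegral.integral_of_le hle,
    integral_inv_of_pos ht (ht.trans_le hle), mul_div_cancel_right₀ _ ht.ne']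
  · refine (intervalIntegrable_iff_integrableOn_Ioc_of_le hle).1 ?_
    refine intervalIntegral.intervalIntegrable_inv (fun u hu => ?_) continuousOn_id
    rw [uIcc_of_le hle] at hu
    exact (ht.trans_le hu.1).ne'
  · exact (ae_restrict_mem measurableSet_Ioc).mono fun u hu => (inv_pos.2 (ht.trans hu.1)).le

lemma map_ceil_log_logMeasure : logMeasure.map (fun u => ⌈Real.log u⌉) = Measure.count := by
  refine Measure.ext_of_singleton fun k => ?_
  have preimage : (fun u => ⌈Real.log u⌉) ⁻¹' {k} ∩ Ioi 0 =
      Ioc (Real.exp (k - 1)) (Real.exp 1 * Real.exp (k - 1)) := by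
    ext u
    rw [← Real.exp_add, add_sub_cancel]
    constructor
    · rintro ⟨hk, hu⟩
      have := Int.ceil_eq_iff.1 hk
      exact ⟨(Real.lt_log_iff_exp_lt hu).1 this.1, (Real.log_le_iff_le_exp hu).1 this.2⟩
    · rintro ⟨h₁, h₂⟩
      have hu : 0 < u := (Real.exp_pos _).trans h₁
      exact ⟨Int.ceil_eq_iff.2 ⟨(Real.lt_log_iff_exp_lt hu).2 h₁,
        (Real.log_le_iff_le_exp hu).2 h₂⟩, hu⟩
  have hmeas : Measurable fun u : ℝ => ⌈Real.log u⌉ := by fun_prop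
  rw [Measure.map_apply hmeas (measurableSet_singleton k), ← logMeasure_restrict_Ioi_zero,
    Measure.restrict_apply (hmeas (measurableSet_singleton k)), preimage,
    logMeasure_Ioc_mul (Real.exp_pos _) (Real.one_le_exp zero_le_one), Real.log_exp,
    ENNReal.ofReal_one, Measure.count_singleton]

lemma le_eLpNorm_logMeasure_restrict {r : ℝ≥0∞} (hr : r ≠ 0) {S : Set ℝ} {t : ℝ} (ht : 0 < t)
    (hS : Ioc t (Real.exp 1 * t) ⊆ S) {c : ℝ≥0∞} {g : ℝ → ℝ≥0∞}
    (h : ∀ u ∈ Ioc t (Real.exp 1 * t), c ≤ g u) : c ≤ eLpNorm g r (logMeasure.restrict S) := by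
  have block : logMeasure (Ioc t (Real.exp 1 * t)) = 1 := by
    rw [logMeasure_Ioc_mul ht (Real.one_le_exp zero_le_one), Real.log_exp, ENNReal.ofReal_one]
  calc c = eLpNorm (fun _ => c) r (logMeasure.restrict (Ioc t (Real.exp 1 * t))) := by
        rw [eLpNorm_const _ hr (by simp [Measure.restrict_eq_zero, block]), enorm_eq_self,
          Measure.restrict_apply_univ, block, ENNReal.one_rpow, mul_one]
    _ ≤ eLpNorm g r (logMeasure.restrict (Ioc t (Real.exp 1 * t))) :=
        eLpNorm_mono_on measurableSet_Ioc h r _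
    _ ≤ eLpNorm g r (logMeasure.restrict S) :=
        eLpNorm_mono_measure g (Measure.restrict_mono hS le_rfl)

end LogMeasure

/-- `F` changes by at most the factor `D` between points of `(0, ∞)` whose logarithms differ by at
most one, so that `F` is determined, up to `D`, by its values at the points `exp k`, `k : ℤ`. -/
def IsDoubling (D : ℝ≥0∞) (F : ℝ → ℝ≥0∞) : Prop :=
  ∀ ⦃s t : ℝ⦄, 0 < s → 0 < t → |Real.log s - Real.log t| ≤ 1 → F s ≤ D * F t

lemma abs_log_sub_log_exp_ceil_le_one (u : ℝ) :
    |Real.log u - Real.log (Real.exp ⌈Real.log u⌉)| ≤ 1 := by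
  rw [Real.log_exp, abs_le]
  constructor <;> linarith [Int.le_ceil (Real.log u), Int.ceil_lt_add_one (Real.log u)]

namespace IsDoubling

variable {D D' : ℝ≥0∞} {F G : ℝ → ℝ≥0∞}

lemma mul (hF : IsDoubling D F) (hG : IsDoubling D' G) :
    IsDoubling (D * D') fun t => F t * G t := fun s t hs ht h =>
  (mul_le_mul' (hF hs ht h) (hG hs ht h)).trans_eq (by ring)

lemma iSup {ι : Sort*} {F : ι → ℝ → ℝ≥0∞} (hF : ∀ i, IsDoubling D (F i)) :
    IsDoubling D fun t => ⨆ i, F i t := fun _ t hs ht h =>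
  iSup_le fun i => (hF i hs ht h).trans <| by gcongr; exact le_iSup (fun i => F i t) i

lemma le_pow_mul (hF : IsDoubling D F) (n : ℕ) {s t : ℝ} (hs : 0 < s) (ht : 0 < t)
    (h : |Real.log s - Real.log t| ≤ n) : F s ≤ D ^ n * F t := by
  induction n generalizing s with
  | zero =>
    have hst : s = t := Real.log_injOn_pos hs ht <| sub_eq_zero.1 <| by simpa using h
    simp [hst]
  | succ n ih =>
    have hn : (0 : ℝ) < n + 1 := by positivity
    set z := Real.log t + n / (n + 1) * (Real.log s - Real.log t) with hz
    have hsz : Real.log s - z = (Real.log s - Real.log t) / (n + 1) := by rw [hz]; field_simp; ring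
    have hzt : z - Real.log t = n * ((Real.log s - Real.log t) / (n + 1)) := by rw [hz]; ring
    have hstep : |(Real.log s - Real.log t) / (n + 1)| ≤ 1 := by
      rw [abs_div, abs_of_pos hn, div_le_one hn]
      exact_mod_cast h
    calc F s ≤ D * F (Real.exp z) := hF hs (Real.exp_pos z) <| by rwa [Real.log_exp, hsz]
      _ ≤ D * (D ^ n * F t) := by
        gcongr
        refine ih (Real.exp_pos z) ?_
        rw [Real.log_exp, hzt, abs_mul, Nat.abs_cast]
        exact mul_le_of_le_one_right n.cast_nonneg hstep
      _ = D ^ (n + 1) * F t := by rw [pow_succ']; ring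

lemma eLpNorm_comp_exp_ceil_log (F : ℝ → ℝ≥0∞) (r : ℝ≥0∞) :
    eLpNorm (fun u => F (Real.exp ⌈Real.log u⌉)) r logMeasure =
      eLpNorm (fun k : ℤ => F (Real.exp k)) r Measure.count := by
  rw [← map_ceil_log_logMeasure, eLpNorm_map_measure
    Measurable.of_discrete.aestronglyMeasurable (by fun_prop)]
  rfl

lemma eLpNorm_logMeasure_le (hF : IsDoubling D F) (hD : D ≠ ∞) (r : ℝ≥0∞) :
    eLpNorm F r logMeasure ≤ D * eLpNorm (fun k : ℤ => F (Real.exp k)) r Measure.count := by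
  rw [← eLpNorm_comp_exp_ceil_log, ← logMeasure_restrict_Ioi_zero]
  refine eLpNorm_le_const_mul_on measurableSet_Ioi hD (fun u hu => ?_) r _
  exact hF hu (Real.exp_pos _) (abs_log_sub_log_exp_ceil_le_one u)

lemma eLpNorm_count_le (hF : IsDoubling D F) (hD : D ≠ ∞) (r : ℝ≥0∞) :
    eLpNorm (fun k : ℤ => F (Real.exp k)) r Measure.count ≤ D * eLpNorm F r logMeasure := by
  rw [← eLpNorm_comp_exp_ceil_log, ← logMeasure_restrict_Ioi_zero]
  refine eLpNorm_le_const_mul_on measurableSet_Ioi hD (fun u hu => ?_) r _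
  exact hF (Real.exp_pos _) hu ((abs_sub_comm _ _).trans_le (abs_log_sub_log_exp_ceil_le_one u))

end IsDoubling

/-- The kernel `min (s / t) (t / s) ^ η` on `(0, ∞)`. -/
def logDecay (η s t : ℝ) : ℝ≥0∞ :=
  ENNReal.ofReal (Real.exp (-η * |Real.log s - Real.log t|))

section LogDecay

lemma logDecay_comm (η s t : ℝ) : logDecay η s t = logDecay η t s := by
  rw [logDecay, logDecay, abs_sub_comm]

lemma logDecay_two_mul (η s t : ℝ) : logDecay (2 * η) s t = logDecay η s t * logDecay η s t := by
  rw [logDecay, logDecay, ← ENNReal.ofReal_mul (Real.exp_pos _).le, ← Real.exp_add]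
  ring_nf

lemma logDecay_ne_top (η s t : ℝ) : logDecay η s t ≠ ∞ := ENNReal.ofReal_ne_top

lemma isDoubling_logDecay {η : ℝ} (hη : 0 ≤ η) (t : ℝ) :
    IsDoubling (ENNReal.ofReal (Real.exp η)) fun s => logDecay η s t := fun s s' _ _ h => by
  simp only [logDecay]
  rw [← ENNReal.ofReal_mul (by positivity), ← Real.exp_add]
  gcongr
  have := abs_sub_le (Real.log s') (Real.log s) (Real.log t)
  rw [abs_sub_comm (Real.log s') (Real.log s)] at this
  nlinarith

lemma eLpNorm_logDecay_exp_count_ne_top {η : ℝ} (hη : 0 < η) (r : ℝ≥0∞) :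
    eLpNorm (fun k : ℤ => logDecay η (Real.exp k) 1) r Measure.count ≠ ∞ := by
  rcases eq_or_ne r 0 with rfl | hr
  · simp
  rcases eq_or_ne r ∞ with rfl | hr'
  · rw [eLpNorm_exponent_top]
    refine ne_top_of_le_ne_top one_ne_top (eLpNormEssSup_le_of_ae_enorm_bound <| ae_of_all _ ?_)
    intro k
    simp only [logDecay, enorm_eq_self, ENNReal.ofReal_le_one, Real.exp_le_one_iff]
    have := abs_nonneg (Real.log (Real.exp k) - Real.log 1)
    nlinarith
  have hpos : 0 < r.toReal := ENNReal.toReal_pos hr hr'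
  rw [eLpNorm_eq_lintegral_rpow_enorm_toReal hr hr', lintegral_count]
  refine ENNReal.rpow_ne_top_of_nonneg (by positivity) ?_
  have summable : Summable fun k : ℤ => Real.exp (-(η * r.toReal) * |(k : ℝ)|) := by
    refine Summable.of_nat_of_neg ?_ ?_ <;>
    · refine (Real.summable_exp_nat_mul_iff.2 (neg_lt_zero.2 (mul_pos hη hpos))).congr fun n => ?_
      simp [mul_comm]
  convert summable.tsum_ofReal_ne_top using 3 with k
  simp [logDecay, ENNReal.ofReal_rpow_of_pos (Real.exp_pos _), ← Real.exp_mul]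
  ring_nf

lemma exists_eLpNorm_logDecay_count_le {η : ℝ} (hη : 0 < η) (r : ℝ≥0∞) : ∃ M ≠ ∞, ∀ i : ℤ,
    eLpNorm (fun k : ℤ => logDecay η (Real.exp k) (Real.exp i)) r Measure.count ≤ M := by
  refine ⟨_, eLpNorm_logDecay_exp_count_ne_top hη r, fun i => le_of_eq ?_⟩
  have shift := eLpNorm_comp_measurePreserving (p := r)
    (g := fun k : ℤ => logDecay η (Real.exp k) 1) Measurable.of_discrete.aestronglyMeasurable
    (measurePreserving_sub_right Measure.count i)
  rw [← shift]
  congr 1 with k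
  simp [logDecay]

lemma exists_eLpNorm_logDecay_le {η : ℝ} (hη : 0 < η) (r : ℝ≥0∞) : ∃ C ≠ ∞, ∀ t : ℝ, 0 < t →
    eLpNorm (fun s => logDecay η s t) r logMeasure ≤ C := by
  obtain ⟨M, hM, hM'⟩ := exists_eLpNorm_logDecay_count_le hη r
  set D := ENNReal.ofReal (Real.exp η)
  have hD : D ≠ ∞ := ENNReal.ofReal_ne_top
  refine ⟨D * (D * M), by finiteness, fun t ht => ?_⟩
  refine ((isDoubling_logDecay hη.le t).eLpNorm_logMeasure_le hD r).trans ?_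
  gcongr
  refine le_trans ?_ (mul_le_mul_right (hM' ⌈Real.log t⌉) D)
  refine (eLpNorm_mono_enorm fun k => ?_).trans (eLpNorm_const_mul_le_of_ne_top hD _ r _)
  simp only [enorm_eq_self, logDecay_comm η (Real.exp k)]
  exact isDoubling_logDecay hη.le _ ht (Real.exp_pos _) (abs_log_sub_log_exp_ceil_le_one t)

lemma IsDoubling.iSup_logDecay_mul_le {D : ℝ≥0∞} {F : ℝ → ℝ≥0∞} (hF : IsDoubling D F) {η : ℝ}
    (hη : 0 ≤ η) (t : ℝ) : ⨆ u : Ioi (0 : ℝ), logDecay η t u * F u ≤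
      ENNReal.ofReal (Real.exp η) * D *
        ⨆ i : ℤ, logDecay η t (Real.exp i) * F (Real.exp i) := by
  refine iSup_le fun ⟨u, hu⟩ => ?_
  have hlog := abs_log_sub_log_exp_ceil_le_one u
  calc logDecay η t u * F u
      ≤ (ENNReal.ofReal (Real.exp η) * logDecay η t (Real.exp ⌈Real.log u⌉)) *
          (D * F (Real.exp ⌈Real.log u⌉)) := by
        rw [logDecay_comm η t u, logDecay_comm η t (Real.exp ⌈Real.log u⌉)]
        exact mul_le_mul' (isDoubling_logDecay hη t hu (Real.exp_pos _) hlog)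
          (hF hu (Real.exp_pos _) hlog)
    _ = ENNReal.ofReal (Real.exp η) * D *
          (logDecay η t (Real.exp ⌈Real.log u⌉) * F (Real.exp ⌈Real.log u⌉)) := by ring
    _ ≤ _ := by
        gcongr
        exact le_iSup (fun i : ℤ => logDecay η t (Real.exp i) * F (Real.exp i)) _

lemma exists_eLpNorm_iSup_logDecay_mul_le {η : ℝ} (hη : 0 < η) {D : ℝ≥0∞} (hD : D ≠ ∞)
    (r : ℝ≥0∞) : ∃ C ≠ ∞, ∀ F, IsDoubling D F →
      eLpNorm (fun t => ⨆ u : Ioi (0 : ℝ), logDecay η t u * F u) r logMeasure ≤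
        C * eLpNorm F r logMeasure := by
  obtain ⟨M, hM, hM'⟩ := exists_eLpNorm_logDecay_count_le hη r
  set A := ENNReal.ofReal (Real.exp η)
  have hA : A ≠ ∞ := ENNReal.ofReal_ne_top
  refine ⟨A * (A * D * (M * D)), by finiteness, fun F hF => ?_⟩
  have sup_doubling : IsDoubling A fun t => ⨆ u : Ioi (0 : ℝ), logDecay η t u * F u :=
    IsDoubling.iSup fun u s t hs ht h =>
      (mul_le_mul_left (isDoubling_logDecay hη.le u hs ht h) _).trans_eq (mul_assoc _ _ _)
  calc eLpNorm (fun t => ⨆ u : Ioi (0 : ℝ), logDecay η t u * F u) r logMeasure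
      ≤ A * eLpNorm (fun k : ℤ => ⨆ u : Ioi (0 : ℝ), logDecay η (Real.exp k) u * F u) r
          Measure.count := sup_doubling.eLpNorm_logMeasure_le hA r
    _ ≤ A * (A * D * eLpNorm (fun k : ℤ => ⨆ i : ℤ,
          logDecay η (Real.exp k) (Real.exp i) * F (Real.exp i)) r Measure.count) := by
        gcongr
        exact (eLpNorm_mono_enorm fun k => by
          simpa using hF.iSup_logDecay_mul_le hη.le (Real.exp k)).trans
          (eLpNorm_const_mul_le_of_ne_top (by finiteness) _ r _)
    _ ≤ A * (A * D * (M * (D * eLpNorm F r logMeasure))) := by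
        gcongr
        refine (eLpNorm_iSup_kernel_mul_le _ hM' _).trans ?_
        gcongr
        exact hF.eLpNorm_count_le hD r
    _ = A * (A * D * (M * D)) * eLpNorm F r logMeasure := by ring

end LogDecay

lemma EquivOn.exists_le_mul {S : Set ℝ} {f g : ℝ → ℝ} (h : EquivOn S f g) :
    ∃ C > 0, ∀ s ∈ S, ∀ t ∈ S, g s ≤ g t → f s ≤ C * f t := by
  obtain ⟨C, hC, hfg⟩ := h
  refine ⟨C * C, by positivity, fun s hs t ht hst => ?_⟩
  have hgt : g t ≤ C * f t := (inv_mul_le_iff₀ hC).1 (hfg t ht).1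
  calc f s ≤ C * g s := (hfg s hs).2
    _ ≤ C * (C * f t) := by gcongr; exact hst.trans hgt
    _ = C * C * f t := by ring

/-- A positive function on `(0, ∞)` which varies regularly with index `α`, in the weak sense of the
Potter bounds: for every `ε > 0`, `g s / g t` agrees with `(s / t) ^ α` up to a factor
`C * max (s / t) (t / s) ^ ε`. Index `0` corresponds to slow variation. -/
structure RegularlyVarying (α : ℝ) (g : ℝ → ℝ) : Prop where
  pos : ∀ ⦃t : ℝ⦄, 0 < t → 0 < g t
  potter : ∀ ⦃ε : ℝ⦄, 0 < ε → ∃ c, ∀ ⦃s t : ℝ⦄, 0 < s → 0 < t →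
    |Real.log (g s) - Real.log (g t) - α * (Real.log s - Real.log t)| ≤
      ε * |Real.log s - Real.log t| + c

lemma abs_mul_div_abs_add_one_le (κ : ℝ) {ε : ℝ} (hε : 0 ≤ ε) : |κ| * (ε / (|κ| + 1)) ≤ ε := by
  rw [mul_div_assoc', div_le_iff₀ (by positivity)]
  linarith [mul_comm |κ| ε]

namespace RegularlyVarying

variable {α β : ℝ} {f g : ℝ → ℝ}

lemma of_le (pos : ∀ ⦃t : ℝ⦄, 0 < t → 0 < g t)
    (potter : ∀ ⦃ε : ℝ⦄, 0 < ε → ∃ c, ∀ ⦃s t : ℝ⦄, 0 < s → s ≤ t →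
      |Real.log (g t) - Real.log (g s) - α * (Real.log t - Real.log s)| ≤
        ε * (Real.log t - Real.log s) + c) :
    RegularlyVarying α g := by
  refine ⟨pos, fun ε hε => (potter hε).imp fun c hc s t hs ht => ?_⟩
  rcases le_total s t with hst | hts
  · rw [abs_sub_comm (Real.log s), abs_of_nonneg (sub_nonneg.2 (Real.log_le_log hs hst)), ← abs_neg]
    convert hc hs hst using 2
    ring
  · rw [abs_of_nonneg (sub_nonneg.2 (Real.log_le_log ht hts))]
    exact hc ht hts

lemma rpow (α : ℝ) : RegularlyVarying α fun t => t ^ α where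
  pos _ ht := Real.rpow_pos_of_pos ht α
  potter ε hε := ⟨0, fun s t hs ht => by
    rw [Real.log_rpow hs, Real.log_rpow ht, ← mul_sub, sub_self, abs_zero]
    positivity⟩

lemma mul (hf : RegularlyVarying α f) (hg : RegularlyVarying β g) :
    RegularlyVarying (α + β) fun t => f t * g t where
  pos _ ht := mul_pos (hf.pos ht) (hg.pos ht)
  potter ε hε := by
    obtain ⟨c, hc⟩ := hf.potter (half_pos hε)
    obtain ⟨d, hd⟩ := hg.potter (half_pos hε)
    refine ⟨c + d, fun s t hs ht => ?_⟩
    rw [Real.log_mul (hf.pos hs).ne' (hg.pos hs).ne', Real.log_mul (hf.pos ht).ne' (hg.pos ht).ne']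
    calc _ = |(Real.log (f s) - Real.log (f t) - α * (Real.log s - Real.log t)) +
          (Real.log (g s) - Real.log (g t) - β * (Real.log s - Real.log t))| := by ring_nf
      _ ≤ (ε / 2 * |Real.log s - Real.log t| + c) + (ε / 2 * |Real.log s - Real.log t| + d) :=
        (abs_add_le _ _).trans (add_le_add (hc hs ht) (hd hs ht))
      _ = _ := by ring

lemma rpow_const (hg : RegularlyVarying α g) (κ : ℝ) :
    RegularlyVarying (κ * α) fun t => g t ^ κ where
  pos _ ht := Real.rpow_pos_of_pos (hg.pos ht) κ
  potter ε hε := by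
    obtain ⟨c, hc⟩ := hg.potter (ε := ε / (|κ| + 1)) (by positivity)
    refine ⟨|κ| * c, fun s t hs ht => ?_⟩
    rw [Real.log_rpow (hg.pos hs), Real.log_rpow (hg.pos ht), mul_assoc, ← mul_sub, ← mul_sub,
      abs_mul]
    calc _ ≤ |κ| * (ε / (|κ| + 1) * |Real.log s - Real.log t| + c) := by gcongr; exact hc hs ht
      _ = |κ| * (ε / (|κ| + 1)) * |Real.log s - Real.log t| + |κ| * c := by ring
      _ ≤ _ := by gcongr; exact abs_mul_div_abs_add_one_le κ hε.le

lemma inv (hg : RegularlyVarying α g) : RegularlyVarying (-α) fun t => (g t)⁻¹ := by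
  simpa [Real.rpow_neg_one] using hg.rpow_const (-1)

lemma div (hf : RegularlyVarying α f) (hg : RegularlyVarying β g) :
    RegularlyVarying (α - β) fun t => f t / g t := by
  simpa only [sub_eq_add_neg, div_eq_mul_inv] using hf.mul hg.inv

lemma exists_abs_log_sub_log_le (hg : RegularlyVarying α g) : ∃ c, ∀ ⦃s t : ℝ⦄, 0 < s → 0 < t →
    |Real.log (g s) - Real.log (g t)| ≤ (|α| + 1) * |Real.log s - Real.log t| + c := by
  obtain ⟨c, hc⟩ := hg.potter one_pos
  refine ⟨c, fun s t hs ht => ?_⟩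
  have := abs_add_le (Real.log (g s) - Real.log (g t) - α * (Real.log s - Real.log t))
    (α * (Real.log s - Real.log t))
  rw [sub_add_cancel, abs_mul] at this
  linarith [hc hs ht]

lemma comp (hf : RegularlyVarying α f) (hg : RegularlyVarying β g) :
    RegularlyVarying (α * β) fun t => f (g t) where
  pos _ ht := hf.pos (hg.pos ht)
  potter ε hε := by
    obtain ⟨b, hb⟩ := hg.exists_abs_log_sub_log_le
    obtain ⟨c, hc⟩ := hf.potter (ε := ε / 2 / (|β| + 1)) (by positivity)
    obtain ⟨d, hd⟩ := hg.potter (ε := ε / 2 / (|α| + 1)) (by positivity)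
    refine ⟨ε / 2 / (|β| + 1) * b + c + |α| * d, fun s t hs ht => ?_⟩
    set Δ := Real.log s - Real.log t
    set Λ := Real.log (g s) - Real.log (g t)
    have houter : |Real.log (f (g s)) - Real.log (f (g t)) - α * Λ| ≤
        ε / 2 * |Δ| + ε / 2 / (|β| + 1) * b + c :=
      calc _ ≤ ε / 2 / (|β| + 1) * |Λ| + c := hc (hg.pos hs) (hg.pos ht)
        _ ≤ ε / 2 / (|β| + 1) * ((|β| + 1) * |Δ| + b) + c := by gcongr; exact hb hs ht
        _ = _ := by field_simp
    have hinner : |α * (Λ - β * Δ)| ≤ ε / 2 * |Δ| + |α| * d :=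
      calc _ = |α| * |Λ - β * Δ| := abs_mul _ _
        _ ≤ |α| * (ε / 2 / (|α| + 1) * |Δ| + d) := by gcongr; exact hd hs ht
        _ = |α| * (ε / 2 / (|α| + 1)) * |Δ| + |α| * d := by ring
        _ ≤ _ := by gcongr; exact abs_mul_div_abs_add_one_le α (half_pos hε).le
    calc _ = |(Real.log (f (g s)) - Real.log (f (g t)) - α * Λ) + α * (Λ - β * Δ)| := by ring_nf
      _ ≤ (ε / 2 * |Δ| + ε / 2 / (|β| + 1) * b + c) + (ε / 2 * |Δ| + |α| * d) :=
        (abs_add_le _ _).trans (add_le_add houter hinner)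
      _ = _ := by ring

lemma exists_le_exp_mul (hg : RegularlyVarying α g) {ε : ℝ} (hε : 0 < ε) :
    ∃ c, ∀ ⦃s t : ℝ⦄, 0 < s → 0 < t →
      g s ≤ Real.exp (α * (Real.log s - Real.log t) + ε * |Real.log s - Real.log t| + c) * g t := by
  obtain ⟨c, hc⟩ := hg.potter hε
  refine ⟨c, fun s t hs ht => ?_⟩
  rw [← Real.exp_log (hg.pos hs), ← div_le_iff₀ (hg.pos ht), ← Real.exp_log (hg.pos ht),
    ← Real.exp_sub]
  gcongr
  linarith [le_of_abs_le (hc hs ht)]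

lemma exists_isDoubling (hg : RegularlyVarying α g) :
    ∃ D ≠ ∞, IsDoubling D fun t => ENNReal.ofReal (g t) := by
  obtain ⟨c, hc⟩ := hg.exists_le_exp_mul one_pos
  refine ⟨ENNReal.ofReal (Real.exp (|α| + 1 + c)), ENNReal.ofReal_ne_top, fun s t hs ht h => ?_⟩
  have hα : α * (Real.log s - Real.log t) ≤ |α| :=
    calc α * (Real.log s - Real.log t) ≤ |α| * |Real.log s - Real.log t| :=
          (le_abs_self _).trans_eq (abs_mul _ _)
      _ ≤ |α| := mul_le_of_le_one_right (abs_nonneg α) h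
  rw [← ENNReal.ofReal_mul (by positivity)]
  refine ENNReal.ofReal_le_ofReal ((hc hs ht).trans ?_)
  refine mul_le_mul_of_nonneg_right (Real.exp_le_exp.2 ?_) (hg.pos ht).le
  linarith

lemma exists_le_logDecay_mul (hg : RegularlyVarying α g) {η : ℝ} (hη : η < α) :
    ∃ C ≠ ∞, ∀ ⦃s t : ℝ⦄, 0 < s → s ≤ t →
      ENNReal.ofReal (g s) ≤ C * logDecay η s t * ENNReal.ofReal (g t) := by
  obtain ⟨c, hc⟩ := hg.exists_le_exp_mul (sub_pos.2 hη)
  refine ⟨ENNReal.ofReal (Real.exp c), ENNReal.ofReal_ne_top, fun s t hs hst => ?_⟩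
  rw [logDecay, ← ENNReal.ofReal_mul (by positivity), ← ENNReal.ofReal_mul (by positivity),
    ← Real.exp_add]
  refine ENNReal.ofReal_le_ofReal ((hc hs (hs.trans_le hst)).trans_eq ?_)
  rw [abs_of_nonpos (sub_nonpos.2 (Real.log_le_log hs hst))]
  ring_nf

end RegularlyVarying

lemma SlowlyVarying.regularlyVarying {b : ℝ → ℝ} (hb : SlowlyVarying b) :
    RegularlyVarying 0 b := by
  obtain ⟨-, pos, equiv⟩ := hb
  refine .of_le pos fun ε hε => ?_
  obtain ⟨⟨g, hg, hbg⟩, h, hh, hbh⟩ := equiv ε hε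
  obtain ⟨C, hC, hCb⟩ := hbg.exists_le_mul
  obtain ⟨D, hD, hDb⟩ := hbh.exists_le_mul
  refine ⟨max (Real.log C) (Real.log D), fun s t hs hst => ?_⟩
  have ht : 0 < t := hs.trans_le hst
  have log_weight {κ u : ℝ} (hu : 0 < u) :
      Real.log (u ^ κ * b u) = κ * Real.log u + Real.log (b u) := by
    rw [Real.log_mul (by positivity) (pos u hu).ne', Real.log_rpow hu]
  have lower := Real.log_le_log (mul_pos (by positivity) (pos s hs)) <|
    hCb s hs t ht (hg hs ht hst)
  have upper := Real.log_le_log (mul_pos (by positivity) (pos t ht)) <|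
    hDb t ht s hs (hh hs ht hst)
  rw [Real.log_mul hC.ne' (mul_pos (by positivity) (pos t ht)).ne', log_weight hs,
    log_weight ht] at lower
  rw [Real.log_mul hD.ne' (mul_pos (by positivity) (pos s hs)).ne', log_weight hs,
    log_weight ht] at upper
  rw [abs_le]
  constructor <;>
    linarith [le_max_left (Real.log C) (Real.log D), le_max_right (Real.log C) (Real.log D)]

/-- The primitive `t ↦ ‖s ^ (-1 / r) * β s‖_{r, (0, t)}` of a weight `β`. -/
def headNorm (r : ℝ≥0∞) (β : ℝ → ℝ) (t : ℝ) : ℝ≥0∞ :=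
  eLpNorm (fun s => ENNReal.ofReal (β s)) r (logMeasure.restrict (Ioo 0 t))

section HeadNorm

variable {r : ℝ≥0∞} {β : ℝ → ℝ}

lemma headNorm_mono {s t : ℝ} (hst : s ≤ t) : headNorm r β s ≤ headNorm r β t :=
  eLpNorm_mono_measure _ (Measure.restrict_mono (Ioo_subset_Ioo_right hst) le_rfl)

lemma LqNorm_svWgt (hr : r ≠ 0) (t : ℝ) : LqNorm r (Ioo 0 t) (svWgt r β) = headNorm r β t :=
  LqNorm_eq_eLpNorm_logMeasure hr measurableSet_Ioo (fun _ hu => hu.1) fun _ hu =>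
    ENNReal.ofReal_mul (Real.rpow_nonneg hu.1.le _)

lemma RegularlyVarying.exists_le_headNorm {α : ℝ} (hβ : RegularlyVarying α β) (hr : r ≠ 0) :
    ∃ C ≠ ∞, ∀ ⦃t : ℝ⦄, 0 < t → ENNReal.ofReal (β t) ≤ C * headNorm r β t := by
  obtain ⟨D, hD, hβD⟩ := hβ.exists_isDoubling
  refine ⟨D ^ 2, by finiteness, fun t ht => ?_⟩
  have hx : Real.exp 1 * Real.exp (Real.log t - 2) = Real.exp (Real.log t - 1) := by
    rw [← Real.exp_add]; ring_nf
  refine le_trans ?_ (eLpNorm_const_mul_le_of_ne_top (by finiteness) _ r _)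
  refine le_eLpNorm_logMeasure_restrict hr (Real.exp_pos (Real.log t - 2))
    (fun u hu => ?_) (fun u hu => ?_)
  all_goals
    rw [hx] at hu
    have hu₀ : 0 < u := (Real.exp_pos _).trans hu.1
    have lower := (Real.lt_log_iff_exp_lt hu₀).2 hu.1
    have upper := (Real.log_le_iff_le_exp hu₀).2 hu.2
  · exact ⟨hu₀, (Real.log_lt_log_iff hu₀ ht).1 (by linarith)⟩
  · refine hβD.le_pow_mul 2 ht hu₀ (abs_le.2 ⟨?_, ?_⟩) <;> push_cast <;> linarith

lemma RegularlyVarying.exists_headNorm_le (hβ : RegularlyVarying 0 β) (hr : r ≠ 0) {ε : ℝ}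
    (hε : 0 < ε) : ∃ C ≠ ∞, ∀ ⦃s t : ℝ⦄, 0 < s → s ≤ t →
      headNorm r β t ≤ C * ENNReal.ofReal (Real.exp (ε * (Real.log t - Real.log s))) *
        headNorm r β s := by
  obtain ⟨c, hc⟩ := hβ.exists_le_exp_mul hε
  obtain ⟨K, hK, hK'⟩ := exists_eLpNorm_logDecay_le hε r
  obtain ⟨C, hC, hC'⟩ := hβ.exists_le_headNorm hr
  refine ⟨2 ^ r⁻¹.toReal * (1 + ENNReal.ofReal (Real.exp c) * C * K), by finiteness,
    fun s t hs hst => ?_⟩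
  have ht : 0 < t := hs.trans_le hst
  set X := ENNReal.ofReal (Real.exp (ε * (Real.log t - Real.log s)))
  have one_le : 1 ≤ X := by
    rw [ENNReal.one_le_ofReal, Real.one_le_exp_iff]
    exact mul_nonneg hε.le (sub_nonneg.2 (Real.log_le_log hs hst))
  have weight_le : ∀ u ∈ Ico s t, ENNReal.ofReal (β u) ≤
      ENNReal.ofReal (Real.exp c) * X * ENNReal.ofReal (β s) * logDecay ε u t := fun u hu => by
    have hu₀ : 0 < u := hs.trans_le hu.1
    rw [mul_right_comm, logDecay, ← ENNReal.ofReal_mul (by positivity),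
      ← ENNReal.ofReal_mul (by positivity), ← ENNReal.ofReal_mul (by positivity), ← Real.exp_add,
      ← Real.exp_add]
    refine ENNReal.ofReal_le_ofReal ((hc hu₀ hs).trans_eq ?_)
    rw [abs_of_nonneg (sub_nonneg.2 (Real.log_le_log hs hu.1)),
      abs_of_nonpos (sub_nonpos.2 (Real.log_le_log hu₀ hu.2.le))]
    ring_nf
  have tail_le : eLpNorm (fun u => ENNReal.ofReal (β u)) r (logMeasure.restrict (Ico s t)) ≤
      ENNReal.ofReal (Real.exp c) * X * (C * headNorm r β s) * K :=
    calc _ ≤ ENNReal.ofReal (Real.exp c) * X * ENNReal.ofReal (β s) *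
          eLpNorm (fun u => logDecay ε u t) r (logMeasure.restrict (Ico s t)) :=
          eLpNorm_le_const_mul_on measurableSet_Ico (by finiteness) weight_le r _
      _ ≤ _ := by
        gcongr
        · exact hC' hs
        · exact (eLpNorm_restrict_le _ _ _ _).trans (hK' t ht)
  rw [headNorm, ← Ioo_union_Ico_eq_Ioo hs hst]
  calc _ ≤ 2 ^ r⁻¹.toReal * (headNorm r β s + _) := eLpNorm_restrict_union_le _ r _ _ _
    _ ≤ 2 ^ r⁻¹.toReal * (X * headNorm r β s +
        ENNReal.ofReal (Real.exp c) * X * (C * headNorm r β s) * K) := by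
      gcongr
      exact le_mul_of_one_le_left' one_le
    _ = _ := by ring

lemma RegularlyVarying.headNorm_ne_top (hβ : RegularlyVarying 0 β) (hr : r ≠ 0)
    (hfin : headNorm r β 1 ≠ ∞) (t : ℝ) : headNorm r β t ≠ ∞ := by
  obtain ⟨C, hC, hC'⟩ := hβ.exists_headNorm_le hr one_pos
  refine ne_top_of_le_ne_top ?_ ((headNorm_mono (le_max_right 1 t)).trans
    (hC' one_pos (le_max_left 1 t)))
  finiteness

lemma RegularlyVarying.headNorm_toReal (hβ : RegularlyVarying 0 β) (hr : r ≠ 0)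
    (hfin : headNorm r β 1 ≠ ∞) :
    RegularlyVarying 0 fun t => (headNorm r β t).toReal := by
  have ne_top := hβ.headNorm_ne_top hr hfin
  have pos ⦃t : ℝ⦄ (ht : 0 < t) : 0 < (headNorm r β t).toReal := by
    obtain ⟨C, -, hC'⟩ := hβ.exists_le_headNorm hr
    refine ENNReal.toReal_pos (fun h => ?_) (ne_top t)
    simpa [h, (hβ.pos ht).not_ge] using hC' ht
  refine .of_le pos fun ε hε => ?_
  obtain ⟨C, hC, hC'⟩ := hβ.exists_headNorm_le hr hε
  refine ⟨Real.log C.toReal, fun s t hs hst => ?_⟩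
  have lower := Real.log_le_log (pos hs) (ENNReal.toReal_mono (ne_top t) (headNorm_mono hst))
  have upper := ENNReal.toReal_mono
    (ENNReal.mul_ne_top (by finiteness) (ne_top s)) (hC' hs hst)
  rw [ENNReal.toReal_mul, ENNReal.toReal_mul, ENNReal.toReal_ofReal (Real.exp_pos _).le] at upper
  have hC₀ : C.toReal ≠ 0 := fun h => by
    rw [h, zero_mul, zero_mul] at upper
    exact upper.not_gt (pos (hs.trans_le hst))
  have log_upper := Real.log_le_log (pos (hs.trans_le hst)) upper
  rw [Real.log_mul (mul_ne_zero hC₀ (Real.exp_ne_zero _)) (pos hs).ne',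
    Real.log_mul hC₀ (Real.exp_ne_zero _), Real.log_exp] at log_upper
  rw [zero_mul, sub_zero, abs_of_nonneg (sub_nonneg.2 lower)]
  linarith

end HeadNorm

section ChangeOfVariables

lemma exists_int_mem_Icc {p : ℤ → ℝ} {L : ℝ} (hbot : Tendsto p atBot atBot)
    (htop : Tendsto p atTop atTop) (hstep : ∀ j, p (j + 1) ≤ p j + L) (x : ℝ) :
    ∃ j, p j ∈ Icc x (x + L) := by
  obtain ⟨b, hb⟩ := eventually_atBot.1 (hbot.eventually_lt_atBot x)
  obtain ⟨j, hj, hmin⟩ := Int.exists_least_of_bdd (P := fun j => x ≤ p j)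
    ⟨b, fun j hj => le_of_not_ge fun hjb => (hb j hjb).not_ge hj⟩
    (htop.eventually_ge_atTop x).exists
  have hprev : p (j - 1) < x := lt_of_not_ge fun h => by have := hmin _ h; omega
  have := hstep (j - 1)
  rw [sub_add_cancel] at this
  exact ⟨j, hj, by linarith⟩

variable {D : ℝ≥0∞} {F : ℝ → ℝ≥0∞} {ρ : ℝ → ℝ} {σ : ℝ}

lemma RegularlyVarying.exists_isDoubling_comp (hρ : RegularlyVarying σ ρ) :
    ∃ n : ℕ, ∀ ⦃D F⦄, IsDoubling D F → IsDoubling (D ^ n) fun t => F (ρ t) := by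
  obtain ⟨c, hc⟩ := hρ.exists_abs_log_sub_log_le
  refine ⟨⌈|σ| + 1 + c⌉₊, fun D F hF s t hs ht h => ?_⟩
  refine hF.le_pow_mul _ (hρ.pos hs) (hρ.pos ht) <| (hc hs ht).trans <| le_trans ?_ (Nat.le_ceil _)
  gcongr
  exact mul_le_of_le_one_right (by positivity) h

lemma RegularlyVarying.exists_dist_le (hρ : RegularlyVarying σ ρ) (hσ : 0 < σ) (L : ℝ) :
    ∃ N : ℕ, ∀ ⦃i j : ℤ⦄, |Real.log (ρ (Real.exp i)) - Real.log (ρ (Real.exp j))| ≤ L →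
      |i - j| ≤ N := by
  obtain ⟨c, hc⟩ := hρ.potter (half_pos hσ)
  refine ⟨⌈2 * (L + c) / σ⌉₊, fun i j hij => ?_⟩
  have hdist : σ / 2 * |(i : ℝ) - j| ≤ L + c := by
    have h := hc (Real.exp_pos i) (Real.exp_pos j)
    rw [Real.log_exp, Real.log_exp] at h
    have := abs_sub_abs_le_abs_sub (σ * ((i : ℝ) - j))
      (Real.log (ρ (Real.exp i)) - Real.log (ρ (Real.exp j)))
    rw [abs_mul, abs_of_pos hσ, abs_sub_comm (σ * _)] at this
    linarith
  have : |(i : ℝ) - j| ≤ ⌈2 * (L + c) / σ⌉₊ := by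
    refine le_trans ?_ (Nat.le_ceil _)
    rw [le_div_iff₀ hσ]
    linarith
  exact_mod_cast this

lemma RegularlyVarying.tendsto_log_comp_exp (hρ : RegularlyVarying σ ρ) (hσ : 0 < σ) :
    Tendsto (fun x => Real.log (ρ (Real.exp x))) atTop atTop ∧
      Tendsto (fun x => Real.log (ρ (Real.exp x))) atBot atBot := by
  obtain ⟨c, hc⟩ := hρ.potter (half_pos hσ)
  set p := fun x => Real.log (ρ (Real.exp x))
  have hp (x : ℝ) : |p x - p 0 - σ * x| ≤ σ / 2 * |x| + c := by
    simpa [p] using hc (Real.exp_pos x) (Real.exp_pos 0)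
  constructor
  · refine tendsto_atTop_mono' atTop ?_
      (tendsto_atTop_add_const_right atTop (p 0 - c) (tendsto_id.const_mul_atTop (half_pos hσ)))
    filter_upwards [eventually_ge_atTop 0] with x hx
    have := (abs_le.1 (hp x)).1
    rw [abs_of_nonneg hx] at this
    simp only [id]
    linarith
  · refine tendsto_atBot_mono' atBot ?_
      (tendsto_atBot_add_const_right atBot (p 0 + c) (tendsto_id.const_mul_atBot (half_pos hσ)))
    filter_upwards [eventually_le_atBot 0] with x hx
    have := (abs_le.1 (hp x)).2
    rw [abs_of_nonpos hx] at this
    simp only [id]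
    linarith

lemma RegularlyVarying.exists_abs_log_sub_le (hρ : RegularlyVarying σ ρ) (hσ : 0 < σ) :
    ∃ L, ∀ x : ℝ, ∃ j : ℤ, |Real.log (ρ (Real.exp j)) - x| ≤ L := by
  obtain ⟨c, hc⟩ := hρ.exists_abs_log_sub_log_le
  obtain ⟨htop, hbot⟩ := hρ.tendsto_log_comp_exp hσ
  have hstep (j : ℤ) : Real.log (ρ (Real.exp ↑(j + 1))) ≤
      Real.log (ρ (Real.exp j)) + (|σ| + 1 + c) := by
    have := le_of_abs_le (hc (Real.exp_pos ↑(j + 1)) (Real.exp_pos j))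
    rw [Real.log_exp, Real.log_exp, ← Int.cast_sub, add_sub_cancel_left, Int.cast_one, abs_one,
      mul_one] at this
    linarith
  refine ⟨|σ| + 1 + c, fun x => ?_⟩
  obtain ⟨j, hxj, hjx⟩ := exists_int_mem_Icc (hbot.comp (tendsto_intCast_atBot_iff.2 tendsto_id))
    (htop.comp tendsto_intCast_atTop_atTop) hstep x
  exact ⟨j, (abs_of_nonneg (sub_nonneg.2 hxj)).trans_le (sub_le_iff_le_add'.2 hjx)⟩

lemma RegularlyVarying.exists_eLpNorm_comp_le (hρ : RegularlyVarying σ ρ) (hσ : 0 < σ)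
    (hD : D ≠ ∞) (r : ℝ≥0∞) : ∃ C ≠ ∞, ∀ ⦃F⦄, IsDoubling D F →
      eLpNorm (fun t => F (ρ t)) r logMeasure ≤ C * eLpNorm F r logMeasure := by
  obtain ⟨n, hn⟩ := hρ.exists_isDoubling_comp
  obtain ⟨N, hN⟩ := hρ.exists_dist_le hσ 1
  set J : ℤ → ℤ := fun i => ⌈Real.log (ρ (Real.exp i))⌉
  have hJ (i j : ℤ) (hij : J i = J j) : |i - j| ≤ N := hN <| by
    have hi := Int.ceil_eq_iff.1 hij
    have hj := Int.ceil_eq_iff.1 (rfl : J j = J j)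
    rw [abs_le]
    constructor <;> linarith [hi.1, hi.2, hj.1, hj.2]
  refine ⟨D ^ n * (D * ((2 * N + 1) ^ r⁻¹.toReal * D)), by finiteness, fun F hF => ?_⟩
  calc eLpNorm (fun t => F (ρ t)) r logMeasure
      ≤ D ^ n * eLpNorm (fun i : ℤ => F (ρ (Real.exp i))) r Measure.count :=
        (hn hF).eLpNorm_logMeasure_le (by finiteness) r
    _ ≤ D ^ n * (D * eLpNorm (fun i => F (Real.exp (J i))) r Measure.count) := by
        gcongr
        refine (eLpNorm_mono_enorm fun i => ?_).trans (eLpNorm_const_mul_le_of_ne_top hD _ r _)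
        simp only [enorm_eq_self]
        exact hF (hρ.pos (Real.exp_pos _)) (Real.exp_pos _) (abs_log_sub_log_exp_ceil_le_one _)
    _ ≤ D ^ n * (D * ((2 * N + 1) ^ r⁻¹.toReal * (D * eLpNorm F r logMeasure))) := by
        gcongr
        refine (eLpNorm_count_comp_le hJ (fun i => F (Real.exp i)) r).trans ?_
        gcongr
        exact hF.eLpNorm_count_le hD r
    _ = _ := by ring

lemma RegularlyVarying.exists_eLpNorm_le_comp (hρ : RegularlyVarying σ ρ) (hσ : 0 < σ)
    (hD : D ≠ ∞) (r : ℝ≥0∞) : ∃ C ≠ ∞, ∀ ⦃F⦄, IsDoubling D F →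
      eLpNorm F r logMeasure ≤ C * eLpNorm (fun t => F (ρ t)) r logMeasure := by
  obtain ⟨n, hn⟩ := hρ.exists_isDoubling_comp
  obtain ⟨L, hL⟩ := hρ.exists_abs_log_sub_le hσ
  choose J hJ using fun i : ℤ => hL i
  have hJ' (i j : ℤ) (hij : J i = J j) : |i - j| ≤ (⌈2 * L⌉₊ : ℤ) := by
    have : |(i : ℝ) - j| ≤ ⌈2 * L⌉₊ := by
      refine le_trans ?_ (Nat.le_ceil _)
      have hi := abs_le.1 (hJ i)
      have hj := abs_le.1 (hJ j)
      rw [hij] at hi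
      rw [abs_le]
      constructor <;> linarith [hi.1, hi.2, hj.1, hj.2]
    exact_mod_cast this
  set m := ⌈L⌉₊
  refine ⟨D * (D ^ m * ((2 * ⌈2 * L⌉₊ + 1) ^ r⁻¹.toReal * D ^ n)), by finiteness, fun F hF => ?_⟩
  calc eLpNorm F r logMeasure
      ≤ D * eLpNorm (fun i : ℤ => F (Real.exp i)) r Measure.count :=
        hF.eLpNorm_logMeasure_le hD r
    _ ≤ D * (D ^ m * eLpNorm (fun i => F (ρ (Real.exp (J i)))) r Measure.count) := by
        gcongr
        refine (eLpNorm_mono_enorm fun i => ?_).trans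
          (eLpNorm_const_mul_le_of_ne_top (by finiteness) _ r _)
        simp only [enorm_eq_self]
        refine hF.le_pow_mul m (Real.exp_pos _) (hρ.pos (Real.exp_pos _)) ?_
        rw [Real.log_exp, abs_sub_comm]
        exact (hJ i).trans (Nat.le_ceil L)
    _ ≤ D * (D ^ m * ((2 * ⌈2 * L⌉₊ + 1) ^ r⁻¹.toReal *
          (D ^ n * eLpNorm (fun t => F (ρ t)) r logMeasure))) := by
        gcongr
        refine (eLpNorm_count_comp_le hJ' (fun i => F (ρ (Real.exp i))) r).trans ?_
        gcongr
        exact (hn hF).eLpNorm_count_le (by finiteness) r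
    _ = _ := by ring

end ChangeOfVariables

/-- The norm `‖β(s) ‖Φ‖_{L_q((s,∞), du/u)}‖_{L_r((0,∞), ds/s)}`, of which the quasi-norm of an
`𝓡`-space is the case `β = b / a`, `Φ(u) = u^{-σ} a(u) K(u, f)`. -/
def iteratedNorm (r q : ℝ≥0∞) (β : ℝ → ℝ) (Φ : ℝ → ℝ≥0∞) : ℝ≥0∞ :=
  eLpNorm (fun s => ENNReal.ofReal (β s) * eLpNorm Φ q (logMeasure.restrict (Ioi s))) r logMeasure

section IteratedNorm

variable {r q : ℝ≥0∞} {β : ℝ → ℝ}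

lemma mul_headNorm_le_iteratedNorm (hq : q ≠ 0) {D : ℝ≥0∞} (hD : D ≠ ∞) {φ H : ℝ → ℝ≥0∞}
    (hφ : IsDoubling D φ) {t : ℝ} (ht : 0 < t) (hH : ∀ u, t ≤ u → H t ≤ H u) :
    φ t * H t * headNorm r β t ≤ D * iteratedNorm r q β fun u => φ u * H u := by
  set Q := fun s => eLpNorm (fun u => φ u * H u) q (logMeasure.restrict (Ioi s))
  have inner (s : ℝ) (hs : s ∈ Ioo 0 t) : φ t * H t ≤ D * Q s := by
    refine le_trans ?_ (eLpNorm_const_mul_le_of_ne_top hD _ q _)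
    refine le_eLpNorm_logMeasure_restrict hq ht (fun u hu => hs.2.trans hu.1) fun u hu => ?_
    rw [← mul_assoc]
    refine mul_le_mul' (hφ ht (ht.trans hu.1) ?_) (hH u hu.1.le)
    have hlow := Real.log_le_log ht hu.1.le
    have hupp := Real.log_le_log (ht.trans hu.1) hu.2
    rw [Real.log_mul (Real.exp_ne_zero 1) ht.ne', Real.log_exp] at hupp
    rw [abs_le]
    constructor <;> linarith
  calc φ t * H t * headNorm r β t
      ≤ eLpNorm (fun s => φ t * H t * ENNReal.ofReal (β s)) r (logMeasure.restrict (Ioo 0 t)) :=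
        const_mul_eLpNorm_le _ _ r _
    _ ≤ D * eLpNorm (fun s => ENNReal.ofReal (β s) * Q s) r (logMeasure.restrict (Ioo 0 t)) := by
        refine eLpNorm_le_const_mul_on measurableSet_Ioo hD (fun s hs => ?_) r _
        calc φ t * H t * ENNReal.ofReal (β s) ≤ D * Q s * ENNReal.ofReal (β s) :=
              mul_le_mul' (inner s hs) le_rfl
          _ = _ := by ring
    _ ≤ D * iteratedNorm r q β fun u => φ u * H u := by
        gcongr
        exact eLpNorm_mono_measure _ Measure.restrict_le_self

lemma logDecay_le_mul_logDecay_max {ε : ℝ} (hε : 0 ≤ ε) {s t u : ℝ} (hs : 0 < s) (ht : 0 < t)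
    (hsu : s < u) :
    logDecay ε u t ≤ logDecay (ε / 2) (max s t) t * logDecay (ε / 2) u t := by
  simp only [logDecay]
  rw [← ENNReal.ofReal_mul (by positivity), ← Real.exp_add]
  gcongr
  have closer : |Real.log (max s t) - Real.log t| ≤ |Real.log u - Real.log t| := by
    rcases le_total s t with hst | hts
    · simp [max_eq_right hst]
    · have hlog := Real.log_le_log hs hsu.le
      have hlog' := Real.log_le_log ht hts
      rw [max_eq_left hts, abs_of_nonneg (by linarith), abs_of_nonneg (by linarith)]
      linarith
  nlinarith

lemma RegularlyVarying.headNorm_ne_zero {α : ℝ} (hβ : RegularlyVarying α β) (hr : r ≠ 0) {t : ℝ}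
    (ht : 0 < t) : headNorm r β t ≠ 0 := fun h => by
  obtain ⟨C, -, hC⟩ := hβ.exists_le_headNorm hr
  have := hC ht
  rw [h, mul_zero, nonpos_iff_eq_zero, ENNReal.ofReal_eq_zero] at this
  exact this.not_gt (hβ.pos ht)

lemma RegularlyVarying.exists_eLpNorm_Ioi_le {α : ℝ} (hβ : RegularlyVarying α β) (hr : r ≠ 0)
    {ε : ℝ} (hε : 0 < ε) (q : ℝ≥0∞) : ∃ C ≠ ∞, ∀ ⦃s t : ℝ⦄ ⦃A Φ⦄, 0 < s → 0 < t → A ≠ ∞ →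
      (∀ u, 0 < u → Φ u ≤ A * logDecay ε u t * (headNorm r β (max u t))⁻¹) →
      eLpNorm Φ q (logMeasure.restrict (Ioi s)) ≤
        C * A * logDecay (ε / 2) (max s t) t * (headNorm r β (max s t))⁻¹ := by
  obtain ⟨C, hC, hC'⟩ := exists_eLpNorm_logDecay_le (half_pos hε) q
  refine ⟨C, hC, fun s t A Φ hs ht hA hΦ => ?_⟩
  have hB := hβ.headNorm_ne_zero hr (lt_max_of_lt_left hs : 0 < max s t)
  have hc : A * logDecay (ε / 2) (max s t) t * (headNorm r β (max s t))⁻¹ ≠ ∞ := by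
    have := logDecay_ne_top (ε / 2) (max s t) t
    finiteness
  calc eLpNorm Φ q (logMeasure.restrict (Ioi s))
      ≤ A * logDecay (ε / 2) (max s t) t * (headNorm r β (max s t))⁻¹ *
          eLpNorm (fun u => logDecay (ε / 2) u t) q (logMeasure.restrict (Ioi s)) := by
        refine eLpNorm_le_const_mul_on measurableSet_Ioi hc (fun u hu => ?_) q _
        calc Φ u ≤ A * logDecay ε u t * (headNorm r β (max u t))⁻¹ := hΦ u (hs.trans hu)
          _ ≤ A * (logDecay (ε / 2) (max s t) t * logDecay (ε / 2) u t) *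
                (headNorm r β (max s t))⁻¹ := by
              gcongr
              · exact logDecay_le_mul_logDecay_max hε.le hs ht hu
              · exact headNorm_mono (max_le_max_right t (mem_Ioi.1 hu).le)
          _ = _ := by ring
    _ ≤ A * logDecay (ε / 2) (max s t) t * (headNorm r β (max s t))⁻¹ * C := by
        gcongr
        exact (eLpNorm_mono_measure _ Measure.restrict_le_self).trans (hC' t ht)
    _ = _ := by ring

lemma RegularlyVarying.exists_iteratedNorm_le {α : ℝ} (hβ : RegularlyVarying α β) (hr : r ≠ 0)
    {ε : ℝ} (hε : 0 < ε) (q : ℝ≥0∞) : ∃ C ≠ ∞, ∀ ⦃t : ℝ⦄ ⦃A Φ⦄, 0 < t → A ≠ ∞ →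
      (∀ u, 0 < u → Φ u ≤ A * logDecay ε u t * (headNorm r β (max u t))⁻¹) →
      iteratedNorm r q β Φ ≤ C * A := by
  obtain ⟨K, hK, hinner⟩ := hβ.exists_eLpNorm_Ioi_le hr hε q
  obtain ⟨M, hM, hM'⟩ := exists_eLpNorm_logDecay_le (half_pos hε) r
  obtain ⟨B, hB, hB'⟩ := hβ.exists_le_headNorm hr
  refine ⟨2 ^ r⁻¹.toReal * (K + B * K * M), by finiteness, fun t A Φ ht hA hΦ => ?_⟩
  set F := fun s => ENNReal.ofReal (β s) * eLpNorm Φ q (logMeasure.restrict (Ioi s))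
  have hKA : K * A ≠ ∞ := by finiteness
  have hlow : eLpNorm F r (logMeasure.restrict (Ioo 0 t)) ≤ K * A := by
    have hBt := hβ.headNorm_ne_zero hr ht
    calc eLpNorm F r (logMeasure.restrict (Ioo 0 t))
        ≤ K * A * (headNorm r β t)⁻¹ * headNorm r β t := by
          refine eLpNorm_le_const_mul_on measurableSet_Ioo (by finiteness) (fun s hs => ?_) r _
          have h := hinner hs.1 ht hA hΦ
          rw [max_eq_right hs.2.le, logDecay, sub_self, abs_zero, mul_zero, Real.exp_zero,
            ENNReal.ofReal_one, mul_one] at h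
          rw [mul_comm _ (ENNReal.ofReal _)]
          exact mul_le_mul_right h _
      _ ≤ K * A := by
          rw [mul_assoc]
          exact mul_le_of_le_one_right' (ENNReal.inv_mul_le_one _)
  have hupp : eLpNorm F r (logMeasure.restrict (Ici t)) ≤ B * (K * A) * M := by
    refine (eLpNorm_le_const_mul_on (g := fun s => logDecay (ε / 2) s t) (c := B * (K * A))
      measurableSet_Ici (by finiteness) (fun s hs => ?_) r _).trans
      (by gcongr; exact (eLpNorm_mono_measure _ Measure.restrict_le_self).trans (hM' t ht))
    have hs0 : 0 < s := ht.trans_le hs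
    calc F s ≤ B * headNorm r β s * (K * A * logDecay (ε / 2) s t * (headNorm r β s)⁻¹) := by
          refine mul_le_mul' (hB' hs0) ?_
          simpa only [max_eq_left (mem_Ici.1 hs)] using hinner hs0 ht hA hΦ
      _ = B * (K * A) * logDecay (ε / 2) s t * (headNorm r β s * (headNorm r β s)⁻¹) := by ring
      _ ≤ B * (K * A) * logDecay (ε / 2) s t := mul_le_of_le_one_right' (ENNReal.mul_inv_le_one _)
  calc iteratedNorm r q β Φ = eLpNorm F r (logMeasure.restrict (Ioo 0 t ∪ Ici t)) := by
        rw [Ioo_union_Ici_eq_Ioi ht, logMeasure_restrict_Ioi_zero]; rfl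
    _ ≤ 2 ^ r⁻¹.toReal * (K * A + B * (K * A) * M) :=
        (eLpNorm_restrict_union_le F r _ _ _).trans (by gcongr)
    _ = _ := by ring

variable {G : Type*} [AddCommGroup G] {N₀ N₁ : G → ℝ≥0∞} {θ : ℝ}

lemma ofReal_rpow_sub_mul {u : ℝ} (hu : 0 < u) (θ κ x : ℝ) (y : ℝ≥0∞) :
    ENNReal.ofReal (u ^ (-θ - κ) * x) * y =
      ENNReal.ofReal (u ^ (-κ)) * (ENNReal.ofReal (u ^ (-θ) * x) * y) := by
  rw [← mul_assoc, ← ENNReal.ofReal_mul (by positivity), ← mul_assoc, ← Real.rpow_add hu,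
    sub_eq_neg_add]

lemma normK_eq_eLpNorm (hq : q ≠ 0) {b w : ℝ → ℝ} (hw : ∀ u, 0 < u → u ^ (-θ) * b u = w u)
    (f : G) :
    normK N₀ N₁ θ q b f =
      eLpNorm (fun u => ENNReal.ofReal (w u) * Kf N₀ N₁ u f) q logMeasure := by
  rw [← logMeasure_restrict_Ioi_zero]
  exact LqNorm_eq_eLpNorm_logMeasure hq measurableSet_Ioi subset_rfl fun u hu => by
    rw [ofReal_rpow_sub_mul hu, hw u hu]

end IteratedNorm

/-- A quasi-seminorm on an additive group, without homogeneity: `N` is even, vanishes at `0` and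
satisfies the triangle inequality up to the finite factor `Q`. -/
structure IsQuasiSeminorm {G : Type*} [AddCommGroup G] (Q : ℝ≥0∞) (N : G → ℝ≥0∞) : Prop where
  map_zero : N 0 = 0
  map_neg : ∀ x, N (-x) = N x
  one_le : 1 ≤ Q
  ne_top : Q ≠ ∞
  add_le : ∀ x y, N (x + y) ≤ Q * (N x + N y)

lemma QuasiBanach.exists_isQuasiSeminorm {E : Type*} [AddCommGroup E] [Module ℝ E]
    (A : QuasiBanach E) : ∃ Q, IsQuasiSeminorm Q A.N :=
  A.quasi.imp fun _ h => ⟨A.zero, fun x => by simpa using A.smul (-1) x, h.1, h.2.1, h.2.2⟩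

section KFunctional

variable {G : Type*} [AddCommGroup G] {N₀ N₁ NR : G → ℝ≥0∞} {Q : ℝ≥0∞}

lemma Kf_mono {s t : ℝ} (hst : s ≤ t) (f : G) : Kf N₀ N₁ s f ≤ Kf N₀ N₁ t f :=
  iInf_mono fun g => by gcongr

lemma Kf_le_ofReal_mul (h : N₀ 0 = 0) (t : ℝ) (f : G) :
    Kf N₀ N₁ t f ≤ ENNReal.ofReal t * N₁ f :=
  (iInf_le _ 0).trans_eq (by rw [h, zero_add, sub_zero])

lemma isDoubling_Kf (f : G) :
    IsDoubling (ENNReal.ofReal (Real.exp 1)) fun t => Kf N₀ N₁ t f := fun s t hs ht h => by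
  have hst : s ≤ Real.exp 1 * t := by
    rw [← Real.log_le_log_iff hs (by positivity), Real.log_mul (Real.exp_ne_zero 1) ht.ne',
      Real.log_exp]
    linarith [le_of_abs_le h]
  have hexp : 1 ≤ ENNReal.ofReal (Real.exp 1) :=
    ENNReal.one_le_ofReal.2 (Real.one_le_exp zero_le_one)
  simp only [Kf]
  rw [ENNReal.mul_iInf_of_ne (one_pos.trans_le hexp).ne' ENNReal.ofReal_ne_top]
  refine iInf_mono fun g => ?_
  rw [mul_add, ← mul_assoc, ← ENNReal.ofReal_mul (by positivity)]
  gcongr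
  exact le_mul_of_one_le_left' hexp

namespace IsQuasiSeminorm

lemma ne_zero (h : IsQuasiSeminorm Q N₀) : Q ≠ 0 := (one_pos.trans_le h.one_le).ne'

lemma Kf_le_mul_add (h : IsQuasiSeminorm Q N₀) (t : ℝ) (f g : G) :
    Kf N₀ N₁ t f ≤ Q * (N₀ g + Kf N₀ N₁ t (f - g)) := by
  rw [Kf, Kf, ENNReal.add_iInf, ENNReal.mul_iInf_of_ne h.ne_zero h.ne_top]
  refine le_iInf fun x => (iInf_le _ (g + x)).trans ?_
  calc N₀ (g + x) + ENNReal.ofReal t * N₁ (f - (g + x))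
      ≤ Q * (N₀ g + N₀ x) + Q * (ENNReal.ofReal t * N₁ (f - g - x)) := by
        rw [sub_sub]
        exact add_le_add (h.add_le g x) (le_mul_of_one_le_left' h.one_le)
    _ = _ := by ring

lemma Kf_le_mul_Kf (h : IsQuasiSeminorm Q N₀) {C : ℝ≥0∞} (hC : C ≠ ∞) {s t : ℝ}
    (hR : ∀ g, Kf N₀ N₁ t g ≤ C * (ENNReal.ofReal s * NR g)) (f : G) :
    Kf N₀ N₁ t f ≤ Q * (1 + C) * Kf N₀ NR s f := by
  have hQ := h.ne_top
  have hQ' : Q * (1 + C) ≠ 0 := mul_ne_zero h.ne_zero (by positivity)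
  rw [Kf.eq_1 N₀ NR, ENNReal.mul_iInf_of_ne hQ' (by finiteness)]
  refine le_iInf fun g => ?_
  calc Kf N₀ N₁ t f ≤ Q * (N₀ g + C * (ENNReal.ofReal s * NR (f - g))) :=
        (h.Kf_le_mul_add t f g).trans (by gcongr; exact hR _)
    _ ≤ Q * ((1 + C) * N₀ g + (1 + C) * (ENNReal.ofReal s * NR (f - g))) := by
        gcongr
        · exact le_mul_of_one_le_left' le_self_add
        · exact le_add_self
    _ = _ := by ring

lemma Kf_sub_le (h : IsQuasiSeminorm Q N₀) {ψ : ℝ → ℝ≥0∞} {t : ℝ} (ht : 0 < t) {A M δ : ℝ≥0∞}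
    (hψ : ∀ u, 0 < u → ENNReal.ofReal (min 1 (u / t)) ≤ A * ψ u) {f g : G}
    (hM : ∀ u, t ≤ u → Kf N₀ N₁ u f ≤ M * ψ u) (hMδ : M ≤ δ)
    (hg : N₀ g + ENNReal.ofReal t * N₁ (f - g) ≤ δ) {u : ℝ} (hu : 0 < u) :
    Kf N₀ N₁ u (f - g) ≤ Q * (A + 1) * δ * ψ u := by
  rcases le_total u t with hut | htu
  · have hmin : min 1 (u / t) = u / t := min_eq_right ((div_le_one ht).2 hut)
    calc Kf N₀ N₁ u (f - g) ≤ ENNReal.ofReal (u / t * t) * N₁ (f - g) := by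
          rw [div_mul_cancel₀ u ht.ne']
          exact Kf_le_ofReal_mul h.map_zero u _
      _ = ENNReal.ofReal (u / t) * (ENNReal.ofReal t * N₁ (f - g)) := by
          rw [ENNReal.ofReal_mul (by positivity), mul_assoc]
      _ ≤ A * ψ u * δ := mul_le_mul' (hmin ▸ hψ u hu) (le_add_self.trans hg)
      _ ≤ Q * (A + 1) * ψ u * δ := by
          gcongr
          exact le_self_add.trans (le_mul_of_one_le_left' h.one_le)
      _ = _ := by ring
  · have hmin : min 1 (u / t) = 1 := min_eq_left ((one_le_div ht).2 htu)
    have hA : 1 ≤ A * ψ u := by simpa only [hmin, ENNReal.ofReal_one] using hψ u hu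
    calc Kf N₀ N₁ u (f - g) ≤ Q * (N₀ g + Kf N₀ N₁ u f) := by
          simpa only [sub_neg_eq_add, sub_add_cancel, h.map_neg] using
            h.Kf_le_mul_add u (f - g) (-g)
      _ ≤ Q * (A * ψ u * δ + δ * ψ u) := by
          gcongr
          · exact (le_self_add.trans hg).trans (le_mul_of_one_le_left' hA)
          · exact (hM u htu).trans (by gcongr)
      _ = _ := by ring

-- An almost optimal decomposition `f = g + (f - g)` for `K(t, f)` is used for `K(s, f)`.
lemma Kf_le_mul_of_forall_le (h : IsQuasiSeminorm Q N₀) {ψ : ℝ → ℝ≥0∞} {s t : ℝ} (ht : 0 < t)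
    {A C M : ℝ≥0∞} (hA : A ≠ ∞) (hC : C ≠ ∞) (hψt : ψ t ≤ 1)
    (hψ : ∀ u, 0 < u → ENNReal.ofReal (min 1 (u / t)) ≤ A * ψ u)
    (hR : ∀ g δ, δ ≠ ∞ → (∀ u, 0 < u → Kf N₀ N₁ u g ≤ δ * ψ u) →
      ENNReal.ofReal s * NR g ≤ C * δ)
    {f : G} (hM : ∀ u, t ≤ u → Kf N₀ N₁ u f ≤ M * ψ u) :
    Kf N₀ NR s f ≤ (1 + C * (Q * (A + 1))) * M := by
  have hQ := h.ne_top
  have hK : (1 + C * (Q * (A + 1))) ≠ ∞ := by finiteness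
  rw [mul_comm, ← ENNReal.div_le_iff (by positivity) hK]
  refine le_of_forall_gt_imp_ge_of_dense fun δ hMδ => ?_
  rw [ENNReal.div_le_iff (by positivity) hK]
  rcases eq_or_ne δ ∞ with rfl | hδ
  · rw [ENNReal.top_mul (by positivity)]
    exact le_top
  obtain ⟨g, hg⟩ := iInf_lt_iff.1 <|
    ((hM t le_rfl).trans (mul_le_of_le_one_right' hψt)).trans_lt hMδ
  calc Kf N₀ NR s f ≤ N₀ g + ENNReal.ofReal s * NR (f - g) := iInf_le _ g
    _ ≤ δ + C * (Q * (A + 1) * δ) :=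
        add_le_add (le_self_add.trans hg.le) <| hR _ _ (by finiteness) fun u hu =>
          h.Kf_sub_le ht hψ hM hMδ.le hg.le hu
    _ = _ := by ring

end IsQuasiSeminorm

end KFunctional

/-- The quasi-norm of the `𝓡`-space with a general weight `φ` in place of `u ^ (-σ) * a u`. -/
def weightedNormR {G : Type*} [AddCommGroup G] (r q : ℝ≥0∞) (β φ : ℝ → ℝ) (N₀ N₁ : G → ℝ≥0∞)
    (f : G) : ℝ≥0∞ :=
  iteratedNorm r q β fun u => ENNReal.ofReal (φ u) * Kf N₀ N₁ u f

/-- The function `ρ = 1 / (φ B)`, with `B(t) = ‖β‖_{L_r((0,t), ds/s)}`, for which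
`K(ρ(t), f; A₀, 𝓡)` is controlled by `K(·, f; A₀, A₁)` as in Holmstedt's formula, where `𝓡` has the
quasi-norm `weightedNormR r q β φ`. -/
def holmstedtFn (r : ℝ≥0∞) (β φ : ℝ → ℝ) (t : ℝ) : ℝ :=
  (φ t * (headNorm r β t).toReal)⁻¹

section Holmstedt

variable {r q : ℝ≥0∞} {β φ : ℝ → ℝ} {σ : ℝ} {G : Type*} [AddCommGroup G] {N₀ N₁ : G → ℝ≥0∞}
  {Q : ℝ≥0∞}

lemma normR_eq_weightedNormR (hq : q ≠ 0) (hr : r ≠ 0) (σ : ℝ) (b a : ℝ → ℝ) :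
    normR N₀ N₁ σ r q b a =
      weightedNormR r q (fun s => b s / a s) (fun u => u ^ (-σ) * a u) N₀ N₁ := by
  funext f
  rw [weightedNormR, iteratedNorm, ← logMeasure_restrict_Ioi_zero]
  refine LqNorm_eq_eLpNorm_logMeasure hr measurableSet_Ioi subset_rfl fun s hs => ?_
  have hs0 : 0 < s := hs
  rw [LqNorm_eq_eLpNorm_logMeasure hq measurableSet_Ioi (Ioi_subset_Ioi hs0.le)
    fun u hu => ofReal_rpow_sub_mul (hs0.trans hu) _ _ _ _, logMeasure_restrict_Ioi_zero,
    ← mul_assoc, ← ENNReal.ofReal_mul (by positivity)]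

lemma RegularlyVarying.holmstedtFn (hφ : RegularlyVarying (-σ) φ) (hβ : RegularlyVarying 0 β)
    (hr : r ≠ 0) (hfin : headNorm r β 1 ≠ ∞) : RegularlyVarying σ (holmstedtFn r β φ) := by
  have := (hφ.mul (hβ.headNorm_toReal hr hfin)).inv
  rwa [add_zero, neg_neg] at this

lemma ofReal_holmstedtFn_mul (hφ : RegularlyVarying (-σ) φ) (hβ : RegularlyVarying 0 β)
    (hr : r ≠ 0) (hfin : headNorm r β 1 ≠ ∞) {t : ℝ} (ht : 0 < t) :
    ENNReal.ofReal (holmstedtFn r β φ t) * (ENNReal.ofReal (φ t) * headNorm r β t) = 1 := by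
  have hne := hβ.headNorm_ne_top hr hfin t
  have hpos : 0 < φ t * (headNorm r β t).toReal :=
    mul_pos (hφ.pos ht) (ENNReal.toReal_pos (hβ.headNorm_ne_zero hr ht) hne)
  rw [holmstedtFn, ← ENNReal.ofReal_toReal hne, ← ENNReal.ofReal_mul (hφ.pos ht).le,
    ENNReal.toReal_ofReal ENNReal.toReal_nonneg, ← ENNReal.ofReal_mul (by positivity),
    inv_mul_cancel₀ hpos.ne', ENNReal.ofReal_one]

lemma holmstedtFn_rpow_neg_mul (σ : ℝ) (a : ℝ → ℝ) {t : ℝ} (ht : 0 ≤ t) :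
    holmstedtFn r β (fun u => u ^ (-σ) * a u) t =
      t ^ σ / (a t * (headNorm r β t).toReal) := by
  rw [holmstedtFn, Real.rpow_neg ht, mul_assoc, mul_inv, inv_inv, div_eq_mul_inv]

lemma exists_Kf_le_mul_Kf_holmstedtFn (h : IsQuasiSeminorm Q N₀) (hφ : RegularlyVarying (-σ) φ)
    (hβ : RegularlyVarying 0 β) (hr : r ≠ 0) (hq : q ≠ 0) (hfin : headNorm r β 1 ≠ ∞) :
    ∃ C ≠ ∞, ∀ ⦃t⦄, 0 < t → ∀ f,
      Kf N₀ N₁ t f ≤ C * Kf N₀ (weightedNormR r q β φ N₀ N₁) (holmstedtFn r β φ t) f := by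
  obtain ⟨D, hD, hφD⟩ := hφ.exists_isDoubling
  have hQ := h.ne_top
  refine ⟨Q * (1 + D), by finiteness, fun t ht => h.Kf_le_mul_Kf hD fun g => ?_⟩
  calc Kf N₀ N₁ t g
      = ENNReal.ofReal (holmstedtFn r β φ t) *
          (ENNReal.ofReal (φ t) * Kf N₀ N₁ t g * headNorm r β t) := by
        rw [mul_right_comm, ← mul_assoc, ofReal_holmstedtFn_mul hφ hβ hr hfin ht, one_mul]
    _ ≤ ENNReal.ofReal (holmstedtFn r β φ t) * (D * weightedNormR r q β φ N₀ N₁ g) :=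
        mul_le_mul' le_rfl (mul_headNorm_le_iteratedNorm hq hD hφD ht fun u hu => Kf_mono hu g)
    _ = _ := mul_left_comm _ _ _

/-- A majorant for `u ↦ K(u, g)`, normalised at `u = t`, which forces the norm
`weightedNormR r q β φ N₀ N₁ g` to be at most a constant times `1 / ρ(t)`. -/
def holmstedtGauge (r : ℝ≥0∞) (β φ : ℝ → ℝ) (ε t u : ℝ) : ℝ≥0∞ :=
  ENNReal.ofReal (φ t) * headNorm r β t * logDecay ε u t *
    (ENNReal.ofReal (φ u) * headNorm r β (max u t))⁻¹

lemma holmstedtGauge_self_le_one (ε t : ℝ) : holmstedtGauge r β φ ε t t ≤ 1 := by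
  rw [holmstedtGauge, max_self, logDecay, sub_self, abs_zero, mul_zero, Real.exp_zero,
    ENNReal.ofReal_one, mul_one]
  exact ENNReal.mul_inv_le_one _

lemma ofReal_holmstedtFn_mul_gauge (hφ : RegularlyVarying (-σ) φ) (hβ : RegularlyVarying 0 β)
    (hr : r ≠ 0) (hfin : headNorm r β 1 ≠ ∞) (ε : ℝ) {t u : ℝ} (ht : 0 < t) (htu : t ≤ u) :
    ENNReal.ofReal (holmstedtFn r β φ t) * holmstedtGauge r β φ ε t u =
      logDecay ε u t * ENNReal.ofReal (holmstedtFn r β φ u) := by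
  rw [holmstedtGauge, max_eq_left htu, ← ENNReal.eq_inv_of_mul_eq_one_left
    (ofReal_holmstedtFn_mul hφ hβ hr hfin (ht.trans_le htu)), ← mul_assoc, ← mul_assoc,
    ofReal_holmstedtFn_mul hφ hβ hr hfin ht, one_mul]

lemma exists_one_le_holmstedtGauge (hφ : RegularlyVarying (-σ) φ) (hβ : RegularlyVarying 0 β)
    (hr : r ≠ 0) (hfin : headNorm r β 1 ≠ ∞) {ε : ℝ} (hε : ε < σ) :
    ∃ A ≠ ∞, ∀ ⦃t u⦄, 0 < t → t ≤ u → 1 ≤ A * holmstedtGauge r β φ ε t u := by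
  obtain ⟨A, hA, hAρ⟩ := (hφ.holmstedtFn hβ hr hfin).exists_le_logDecay_mul hε
  refine ⟨A, hA, fun t u ht htu => ?_⟩
  calc 1 = ENNReal.ofReal (holmstedtFn r β φ t) * (ENNReal.ofReal (φ t) * headNorm r β t) :=
        (ofReal_holmstedtFn_mul hφ hβ hr hfin ht).symm
    _ ≤ A * logDecay ε t u * ENNReal.ofReal (holmstedtFn r β φ u) *
          (ENNReal.ofReal (φ t) * headNorm r β t) := by
        gcongr
        exact hAρ ht htu
    _ = A * holmstedtGauge r β φ ε t u := by
        rw [holmstedtGauge, max_eq_left htu, logDecay_comm, ENNReal.eq_inv_of_mul_eq_one_left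
          (ofReal_holmstedtFn_mul hφ hβ hr hfin (ht.trans_le htu))]
        ring

lemma RegularlyVarying.exists_ofReal_div_mul_le (hφ : RegularlyVarying (-σ) φ) {ε : ℝ}
    (hε : ε < 1 - σ) : ∃ A ≠ ∞, ∀ ⦃t u⦄, 0 < u → u ≤ t →
      ENNReal.ofReal (u / t) * ENNReal.ofReal (φ u) ≤
        A * (ENNReal.ofReal (φ t) * logDecay ε u t) := by
  obtain ⟨A, hA, hAφ⟩ := ((RegularlyVarying.rpow 1).mul hφ).exists_le_logDecay_mul hε
  refine ⟨A, hA, fun t u hu hut => ?_⟩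
  have ht : 0 < t := hu.trans_le hut
  have h := hAφ hu hut
  simp only [Real.rpow_one] at h
  calc ENNReal.ofReal (u / t) * ENNReal.ofReal (φ u)
      = ENNReal.ofReal t⁻¹ * ENNReal.ofReal (u * φ u) := by
        rw [← ENNReal.ofReal_mul (by positivity), ← ENNReal.ofReal_mul (by positivity)]
        ring_nf
    _ ≤ ENNReal.ofReal t⁻¹ * (A * logDecay ε u t * ENNReal.ofReal (t * φ t)) := by gcongr
    _ = ENNReal.ofReal (t⁻¹ * t) * (A * (ENNReal.ofReal (φ t) * logDecay ε u t)) := by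
        rw [ENNReal.ofReal_mul ht.le, ENNReal.ofReal_mul (by positivity)]
        ring
    _ = _ := by rw [inv_mul_cancel₀ ht.ne', ENNReal.ofReal_one, one_mul]

lemma exists_ofReal_div_le_holmstedtGauge (hφ : RegularlyVarying (-σ) φ)
    (hβ : RegularlyVarying 0 β) (hr : r ≠ 0) (hfin : headNorm r β 1 ≠ ∞) {ε : ℝ}
    (hε : ε < 1 - σ) : ∃ A ≠ ∞, ∀ ⦃t u⦄, 0 < u → u ≤ t →
      ENNReal.ofReal (u / t) ≤ A * holmstedtGauge r β φ ε t u := by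
  obtain ⟨A, hA, hAφ⟩ := hφ.exists_ofReal_div_mul_le hε
  refine ⟨A, hA, fun t u hu hut => ?_⟩
  have hB := hβ.headNorm_ne_zero hr (hu.trans_le hut)
  have hB' := hβ.headNorm_ne_top hr hfin t
  have hφu : ENNReal.ofReal (φ u) ≠ 0 := (ENNReal.ofReal_pos.2 (hφ.pos hu)).ne'
  rw [holmstedtGauge, max_eq_right hut, ← mul_assoc, ← div_eq_mul_inv,
    ENNReal.le_div_iff_mul_le (.inl (mul_ne_zero hφu hB)) (.inl (by finiteness))]
  calc ENNReal.ofReal (u / t) * (ENNReal.ofReal (φ u) * headNorm r β t)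
      ≤ A * (ENNReal.ofReal (φ t) * logDecay ε u t) * headNorm r β t := by
        rw [← mul_assoc]
        gcongr ?_ * _
        exact hAφ hu hut
    _ = _ := by ring

lemma exists_le_holmstedtGauge (hφ : RegularlyVarying (-σ) φ) (hβ : RegularlyVarying 0 β)
    (hr : r ≠ 0) (hfin : headNorm r β 1 ≠ ∞) {ε : ℝ} (hε : ε < σ) (hε' : ε < 1 - σ) :
    ∃ A ≠ ∞, ∀ ⦃t⦄, 0 < t → ∀ u, 0 < u →
      ENNReal.ofReal (min 1 (u / t)) ≤ A * holmstedtGauge r β φ ε t u := by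
  obtain ⟨C, hC, hC'⟩ := exists_one_le_holmstedtGauge hφ hβ hr hfin hε
  obtain ⟨D, hD, hD'⟩ := exists_ofReal_div_le_holmstedtGauge hφ hβ hr hfin hε'
  refine ⟨max C D, by finiteness, fun t ht u hu => ?_⟩
  rcases le_total t u with htu | hut
  · calc ENNReal.ofReal (min 1 (u / t)) ≤ 1 := ENNReal.ofReal_le_one.2 (min_le_left _ _)
      _ ≤ C * holmstedtGauge r β φ ε t u := hC' ht htu
      _ ≤ _ := by gcongr; exact le_max_left C D
  · calc ENNReal.ofReal (min 1 (u / t)) ≤ ENNReal.ofReal (u / t) := by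
          gcongr
          exact min_le_right _ _
      _ ≤ D * holmstedtGauge r β φ ε t u := hD' hu hut
      _ ≤ _ := by gcongr; exact le_max_right C D

lemma exists_holmstedtFn_mul_weightedNormR_le (hφ : RegularlyVarying (-σ) φ)
    (hβ : RegularlyVarying 0 β) (hr : r ≠ 0) (hfin : headNorm r β 1 ≠ ∞) {ε : ℝ} (hε : 0 < ε)
    (q : ℝ≥0∞) : ∃ C ≠ ∞, ∀ ⦃t⦄, 0 < t → ∀ (g : G) (δ : ℝ≥0∞), δ ≠ ∞ →
      (∀ u, 0 < u → Kf N₀ N₁ u g ≤ δ * holmstedtGauge r β φ ε t u) →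
        ENNReal.ofReal (holmstedtFn r β φ t) * weightedNormR r q β φ N₀ N₁ g ≤ C * δ := by
  obtain ⟨C, hC, hC'⟩ := hβ.exists_iteratedNorm_le hr hε q
  refine ⟨C, hC, fun t ht g δ hδ hg => ?_⟩
  have hB := hβ.headNorm_ne_top hr hfin t
  have bound (u : ℝ) (hu : 0 < u) : ENNReal.ofReal (φ u) * Kf N₀ N₁ u g ≤
      δ * (ENNReal.ofReal (φ t) * headNorm r β t) * logDecay ε u t *
        (headNorm r β (max u t))⁻¹ := by
    have hφu : ENNReal.ofReal (φ u) ≠ 0 := (ENNReal.ofReal_pos.2 (hφ.pos hu)).ne'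
    calc ENNReal.ofReal (φ u) * Kf N₀ N₁ u g
        ≤ ENNReal.ofReal (φ u) * (δ * holmstedtGauge r β φ ε t u) := by
          gcongr
          exact hg u hu
      _ = δ * (ENNReal.ofReal (φ t) * headNorm r β t) * logDecay ε u t *
            (headNorm r β (max u t))⁻¹ * (ENNReal.ofReal (φ u) * (ENNReal.ofReal (φ u))⁻¹) := by
          rw [holmstedtGauge, ENNReal.mul_inv (.inl hφu) (.inl ENNReal.ofReal_ne_top)]
          ring
      _ ≤ _ := mul_le_of_le_one_right' (ENNReal.mul_inv_le_one _)
  calc ENNReal.ofReal (holmstedtFn r β φ t) * weightedNormR r q β φ N₀ N₁ g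
      ≤ ENNReal.ofReal (holmstedtFn r β φ t) *
          (C * (δ * (ENNReal.ofReal (φ t) * headNorm r β t))) := by
        gcongr
        exact hC' ht (by finiteness) bound
    _ = C * δ * (ENNReal.ofReal (holmstedtFn r β φ t) *
          (ENNReal.ofReal (φ t) * headNorm r β t)) := by ring
    _ = C * δ := by rw [ofReal_holmstedtFn_mul hφ hβ hr hfin ht, mul_one]

lemma exists_Kf_holmstedtFn_le (h : IsQuasiSeminorm Q N₀) (hφ : RegularlyVarying (-σ) φ)
    (hβ : RegularlyVarying 0 β) (hr : r ≠ 0) (hfin : headNorm r β 1 ≠ ∞) {ε : ℝ} (hε : 0 < ε)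
    (hεσ : ε < σ) (hεσ' : ε < 1 - σ) (q : ℝ≥0∞) :
    ∃ C ≠ ∞, ∀ ⦃t⦄, 0 < t → ∀ f M,
      (∀ u, t ≤ u → Kf N₀ N₁ u f ≤ M * holmstedtGauge r β φ ε t u) →
        Kf N₀ (weightedNormR r q β φ N₀ N₁) (holmstedtFn r β φ t) f ≤ C * M := by
  obtain ⟨A, hA, hAψ⟩ := exists_le_holmstedtGauge hφ hβ hr hfin hεσ hεσ'
  obtain ⟨C, hC, hCR⟩ := exists_holmstedtFn_mul_weightedNormR_le (N₀ := N₀) (N₁ := N₁)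
    hφ hβ hr hfin hε q
  have hQ := h.ne_top
  exact ⟨1 + C * (Q * (A + 1)), by finiteness, fun t ht f M hM => h.Kf_le_mul_of_forall_le ht hA hC
    (holmstedtGauge_self_le_one ε t) (hAψ ht) (hCR ht) hM⟩

end Holmstedt

section Reiteration

variable {r q p : ℝ≥0∞} {β φ w : ℝ → ℝ} {σ θ : ℝ} {G : Type*} [AddCommGroup G]
  {N₀ N₁ : G → ℝ≥0∞} {Q : ℝ≥0∞}

lemma RegularlyVarying.exists_isDoubling_mul_Kf {α : ℝ} (hw : RegularlyVarying α w) :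
    ∃ D ≠ ∞, ∀ f : G, IsDoubling D fun t => ENNReal.ofReal (w t) * Kf N₀ N₁ t f := by
  obtain ⟨D, hD, hwD⟩ := hw.exists_isDoubling
  exact ⟨D * ENNReal.ofReal (Real.exp 1), by finiteness, fun f => hwD.mul (isDoubling_Kf f)⟩

lemma le_mul_holmstedtGauge (hφ : RegularlyVarying (-σ) φ) (hβ : RegularlyVarying 0 β)
    (hr : r ≠ 0) (hfin : headNorm r β 1 ≠ ∞) {ε : ℝ} {t u : ℝ} (ht : 0 < t) (htu : t ≤ u)
    {A S k x y : ℝ≥0∞} (hx : x ≠ 0) (hx' : x ≠ ∞)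
    (hA : ENNReal.ofReal (holmstedtFn r β φ t) * x ≤
      A * logDecay (2 * ε) t u * (ENNReal.ofReal (holmstedtFn r β φ u) * y))
    (hS : logDecay ε t u * (y * k) ≤ S) : k ≤ A * S * x⁻¹ * holmstedtGauge r β φ ε t u := by
  have hρt := (ENNReal.ofReal_pos.2 ((hφ.holmstedtFn hβ hr hfin).pos ht)).ne'
  rw [mul_right_comm, ← div_eq_mul_inv, ENNReal.le_div_iff_mul_le (.inl hx) (.inl hx'),
    ← ENNReal.mul_le_mul_iff_right hρt ENNReal.ofReal_ne_top]
  calc ENNReal.ofReal (holmstedtFn r β φ t) * (k * x)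
      = ENNReal.ofReal (holmstedtFn r β φ t) * x * k := by ring
    _ ≤ A * logDecay (2 * ε) t u * (ENNReal.ofReal (holmstedtFn r β φ u) * y) * k := by gcongr
    _ = A * (logDecay ε u t * ENNReal.ofReal (holmstedtFn r β φ u)) *
          (logDecay ε t u * (y * k)) := by
        rw [logDecay_two_mul, logDecay_comm ε u t]
        ring
    _ ≤ A * (logDecay ε u t * ENNReal.ofReal (holmstedtFn r β φ u)) * S := by gcongr
    _ = ENNReal.ofReal (holmstedtFn r β φ t) * (A * S * holmstedtGauge r β φ ε t u) := by
        rw [← ofReal_holmstedtFn_mul_gauge hφ hβ hr hfin ε ht htu]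
        ring

lemma exists_mul_Kf_holmstedtFn_le_iSup (h : IsQuasiSeminorm Q N₀)
    (hφ : RegularlyVarying (-σ) φ) (hβ : RegularlyVarying 0 β) (hw : RegularlyVarying (-θ) w)
    (hr : r ≠ 0) (hfin : headNorm r β 1 ≠ ∞) {ε : ℝ} (hε : 0 < ε) (hεσ : ε < σ)
    (hεσ' : ε < 1 - σ) (hεθ : 2 * ε < σ * (1 - θ)) (q : ℝ≥0∞) :
    ∃ C ≠ ∞, ∀ ⦃t⦄, 0 < t → ∀ f,
      ENNReal.ofReal (w (holmstedtFn r β φ t)) *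
          Kf N₀ (weightedNormR r q β φ N₀ N₁) (holmstedtFn r β φ t) f ≤
        C * ⨆ u : Ioi (0 : ℝ), logDecay ε t u *
          (ENNReal.ofReal (w (holmstedtFn r β φ u)) * Kf N₀ N₁ u f) := by
  have hρ := hφ.holmstedtFn hβ hr hfin
  obtain ⟨A, hA, hAV⟩ := (hρ.mul (hw.comp hρ)).exists_le_logDecay_mul (η := 2 * ε) (by linarith)
  obtain ⟨C, hC, hCK⟩ := exists_Kf_holmstedtFn_le (N₁ := N₁) h hφ hβ hr hfin hε hεσ hεσ' q
  refine ⟨C * A, by finiteness, fun t ht f => ?_⟩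
  set ρ := holmstedtFn r β φ
  set S := ⨆ u : Ioi (0 : ℝ), logDecay ε t u * (ENNReal.ofReal (w (ρ u)) * Kf N₀ N₁ u f)
  have hwt : ENNReal.ofReal (w (ρ t)) ≠ 0 := (ENNReal.ofReal_pos.2 (hw.pos (hρ.pos ht))).ne'
  have key (u : ℝ) (htu : t ≤ u) : Kf N₀ N₁ u f ≤
      A * S * (ENNReal.ofReal (w (ρ t)))⁻¹ * holmstedtGauge r β φ ε t u := by
    have hS : logDecay ε t u * (ENNReal.ofReal (w (ρ u)) * Kf N₀ N₁ u f) ≤ S :=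
      le_iSup (fun u : Ioi (0 : ℝ) => logDecay ε t u *
        (ENNReal.ofReal (w (ρ u)) * Kf N₀ N₁ u f)) ⟨u, ht.trans_le htu⟩
    refine le_mul_holmstedtGauge hφ hβ hr hfin ht htu hwt ENNReal.ofReal_ne_top ?_ hS
    simpa only [ENNReal.ofReal_mul (hρ.pos ht).le, ENNReal.ofReal_mul (hρ.pos (ht.trans_le htu)).le]
      using hAV ht htu
  calc ENNReal.ofReal (w (ρ t)) * Kf N₀ (weightedNormR r q β φ N₀ N₁) (ρ t) f
      ≤ ENNReal.ofReal (w (ρ t)) * (C * (A * S * (ENNReal.ofReal (w (ρ t)))⁻¹)) := by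
        gcongr
        exact hCK ht f _ key
    _ = C * A * S * (ENNReal.ofReal (w (ρ t)) * (ENNReal.ofReal (w (ρ t)))⁻¹) := by ring
    _ ≤ C * A * S := mul_le_of_le_one_right' (ENNReal.mul_inv_le_one _)

lemma exists_eLpNorm_Kf_comp_le (h : IsQuasiSeminorm Q N₀)
    (hφ : RegularlyVarying (-σ) φ) (hβ : RegularlyVarying 0 β) {α : ℝ}
    (hw : RegularlyVarying α w) (hr : r ≠ 0) (hq : q ≠ 0) (hfin : headNorm r β 1 ≠ ∞)
    (hσ : 0 < σ) (p : ℝ≥0∞) : ∃ C ≠ ∞, ∀ f,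
      eLpNorm (fun t => ENNReal.ofReal (w (holmstedtFn r β φ t)) * Kf N₀ N₁ t f) p logMeasure ≤
        C * eLpNorm (fun t => ENNReal.ofReal (w t) * Kf N₀ (weightedNormR r q β φ N₀ N₁) t f) p
          logMeasure := by
  obtain ⟨C, hC, hCK⟩ := exists_Kf_le_mul_Kf_holmstedtFn (N₁ := N₁) h hφ hβ hr hq hfin
  obtain ⟨D, hD, hF⟩ := hw.exists_isDoubling_mul_Kf (N₀ := N₀) (N₁ := weightedNormR r q β φ N₀ N₁)
  obtain ⟨M, hM, hMF⟩ := (hφ.holmstedtFn hβ hr hfin).exists_eLpNorm_comp_le hσ hD p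
  refine ⟨C * M, by finiteness, fun f => ?_⟩
  rw [mul_assoc, ← logMeasure_restrict_Ioi_zero]
  refine (eLpNorm_le_const_mul_on measurableSet_Ioi hC (fun t ht => ?_) p _).trans
    (mul_le_mul' le_rfl (logMeasure_restrict_Ioi_zero ▸ hMF (hF f)))
  rw [mul_left_comm]
  gcongr
  exact hCK ht f

lemma exists_eLpNorm_Kf_le_comp (h : IsQuasiSeminorm Q N₀)
    (hφ : RegularlyVarying (-σ) φ) (hβ : RegularlyVarying 0 β) (hw : RegularlyVarying (-θ) w)
    (hr : r ≠ 0) (hfin : headNorm r β 1 ≠ ∞) (hσ : 0 < σ) (hσ' : σ < 1) (hθ : θ < 1)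
    (q p : ℝ≥0∞) : ∃ C ≠ ∞, ∀ f,
      eLpNorm (fun t => ENNReal.ofReal (w t) * Kf N₀ (weightedNormR r q β φ N₀ N₁) t f) p
          logMeasure ≤
        C * eLpNorm (fun t => ENNReal.ofReal (w (holmstedtFn r β φ t)) * Kf N₀ N₁ t f) p
          logMeasure := by
  have hρ := hφ.holmstedtFn hβ hr hfin
  have hθ' : 0 < σ * (1 - θ) := mul_pos hσ (sub_pos.2 hθ)
  obtain ⟨ε, hε, hmin⟩ := exists_between
    (lt_min hσ (lt_min (sub_pos.2 hσ') (half_pos hθ')))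
  obtain ⟨hεσ, hεσ', hεθ⟩ := by simpa only [lt_min_iff] using hmin
  obtain ⟨C, hC, hCS⟩ := exists_mul_Kf_holmstedtFn_le_iSup (N₁ := N₁) h hφ hβ hw hr hfin hε hεσ
    hεσ' (by linarith) q
  obtain ⟨D, hD, hF⟩ := hw.exists_isDoubling_mul_Kf (N₀ := N₀) (N₁ := weightedNormR r q β φ N₀ N₁)
  obtain ⟨M, hM, hMF⟩ := hρ.exists_eLpNorm_le_comp hσ hD p
  obtain ⟨D', hD', hF'⟩ := (hw.comp hρ).exists_isDoubling_mul_Kf (N₀ := N₀) (N₁ := N₁)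
  obtain ⟨H, hH, hHF⟩ := exists_eLpNorm_iSup_logDecay_mul_le hε hD' p
  refine ⟨M * (C * H), by finiteness, fun f => (hMF (hF f)).trans ?_⟩
  rw [mul_assoc, mul_assoc]
  refine mul_le_mul' le_rfl (le_trans ?_ (mul_le_mul' le_rfl (hHF _ (hF' f))))
  rw [← logMeasure_restrict_Ioi_zero]
  exact eLpNorm_le_const_mul_on measurableSet_Ioi hC (fun t ht => hCS ht f) p _

end Reiteration

lemma EquivNorms.of_le_mul {X : Type*} {nX nY : X → ℝ≥0∞} (h : ∃ C ≠ ∞, ∀ f, nX f ≤ C * nY f)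
    (h' : ∃ C ≠ ∞, ∀ f, nY f ≤ C * nX f) : EquivNorms nX nY := by
  obtain ⟨C, hC, hCf⟩ := h
  obtain ⟨D, hD, hDf⟩ := h'
  refine ⟨C + D + 1, by simp, by finiteness, fun f => ⟨?_, ?_⟩⟩
  · rw [← ENNReal.div_eq_inv_mul]
    refine ENNReal.div_le_of_le_mul' ((hDf f).trans ?_)
    gcongr
    exact le_add_self.trans le_self_add
  · refine (hCf f).trans ?_
    gcongr
    exact le_self_add.trans le_self_add

lemma rpow_div_rpow_neg {t c : ℝ} (ht : 0 ≤ t) (hc : 0 ≤ c) (σ θ : ℝ) :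
    (t ^ σ / c) ^ (-θ) = t ^ (-(θ * σ)) * c ^ θ := by
  rw [Real.div_rpow (Real.rpow_nonneg ht σ) hc, ← Real.rpow_mul ht, Real.rpow_neg hc,
    div_inv_eq_mul, mul_neg, mul_comm σ]

theorem theorem21_general {G : Type*} [AddCommGroup G] {Q : ℝ≥0∞} {N₀ : G → ℝ≥0∞}
    (hN₀ : IsQuasiSeminorm Q N₀) (N₁ : G → ℝ≥0∞) {θ₁ θ : ℝ} (hθ₁ : 0 < θ₁) (hθ₁' : θ₁ < 1)
    (hθ : θ < 1) {q₁ r₁ r : ℝ≥0∞} (hq₁ : 0 < q₁) (hr₁ : 0 < r₁) (hr : 0 < r) {a a₁ b₁ : ℝ → ℝ}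
    (ha : RegularlyVarying 0 a) (ha₁ : RegularlyVarying 0 a₁) (hb₁ : RegularlyVarying 0 b₁)
    (hfin : LqNorm r₁ (Ioo 0 1) (svWgt r₁ fun s => b₁ s / a₁ s) ≠ ∞) {c₁ ρ : ℝ → ℝ}
    (hc₁ : ∀ t, c₁ t = a₁ t * (LqNorm r₁ (Ioo 0 t) (svWgt r₁ fun s => b₁ s / a₁ s)).toReal)
    (hρ : ∀ t, ρ t = t ^ θ₁ / c₁ t) :
    EquivNorms (normK N₀ (normR N₀ N₁ θ₁ r₁ q₁ b₁ a₁) θ r a)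
      (normK N₀ N₁ (θ * θ₁) r fun t => c₁ t ^ θ * a (ρ t)) := by
  simp only [LqNorm_svWgt hr₁.ne'] at hfin hc₁
  have hβ : RegularlyVarying 0 fun s => b₁ s / a₁ s := by simpa using hb₁.div ha₁
  have hφ : RegularlyVarying (-θ₁) fun u => u ^ (-θ₁) * a₁ u := by
    simpa using (RegularlyVarying.rpow (-θ₁)).mul ha₁
  have hw : RegularlyVarying (-θ) fun u => u ^ (-θ) * a u := by
    simpa using (RegularlyVarying.rpow (-θ)).mul ha
  have hρ' (t : ℝ) (ht : 0 < t) : t ^ (-(θ * θ₁)) * (c₁ t ^ θ * a (ρ t)) =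
      holmstedtFn r₁ (fun s => b₁ s / a₁ s) (fun u => u ^ (-θ₁) * a₁ u) t ^ (-θ) *
        a (holmstedtFn r₁ (fun s => b₁ s / a₁ s) (fun u => u ^ (-θ₁) * a₁ u) t) := by
    have hc : 0 ≤ c₁ t := hc₁ t ▸ mul_nonneg (ha₁.pos ht).le ENNReal.toReal_nonneg
    rw [holmstedtFn_rpow_neg_mul θ₁ a₁ ht.le, ← hc₁, ← hρ, ← mul_assoc, hρ,
      rpow_div_rpow_neg ht.le hc]
  rw [normR_eq_weightedNormR hq₁.ne' hr₁.ne', funext (normK_eq_eLpNorm hr.ne' fun _ _ => rfl),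
    funext (normK_eq_eLpNorm hr.ne' hρ')]
  exact .of_le_mul
    (exists_eLpNorm_Kf_le_comp hN₀ hφ hβ hw hr₁.ne' hfin hθ₁ hθ₁' hθ q₁ r)
    (exists_eLpNorm_Kf_comp_le hN₀ hφ hβ hw hr₁.ne' hq₁.ne' hfin hθ₁ r)

theorem theorem21
    (A₀ A₁ : QuasiBanach E)
    (hne : ∃ x : E, x ≠ 0 ∧ A₀.N x ≠ ∞ ∧ A₁.N x ≠ ∞)
    (θ₁ θ : ℝ) (hθ₁ : 0 < θ₁) (hθ₁' : θ₁ < 1) (hθ : 0 ≤ θ) (hθ' : θ < 1)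
    (q₁ r₁ r : ℝ≥0∞) (hq₁ : 0 < q₁) (hr₁ : 0 < r₁) (hr : 0 < r)
    (a a₁ b₁ : ℝ → ℝ)
    (h_sv_a : SlowlyVarying a)
    (h_sv_a₁ : SlowlyVarying a₁)
    (h_sv_b₁ : SlowlyVarying b₁)
    (hfin : LqNorm r₁ (Ioo 0 1) (svWgt r₁ (fun s => b₁ s / a₁ s)) ≠ ∞)
    (hθ0 : θ = 0 → LqNorm r (Ioi 1) (svWgt r (fun s => a s)) ≠ ∞)
    (c₁ ρ : ℝ → ℝ)
    (hc₁ : ∀ t, c₁ t = a₁ t * (LqNorm r₁ (Ioo 0 t) (svWgt r₁ (fun s => b₁ s / a₁ s))).toReal)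
    (hρ : ∀ t, ρ t = t ^ θ₁ / c₁ t) :
    EquivNorms
      (normK A₀.N (normR A₀.N A₁.N θ₁ r₁ q₁ b₁ a₁) θ r a)
      (normK A₀.N A₁.N (θ * θ₁) r (fun t => c₁ t ^ θ * a (ρ t))) := by
  obtain ⟨Q, hQ⟩ := A₀.exists_isQuasiSeminorm
  exact theorem21_general hQ A₁.N hθ₁ hθ₁' hθ' hq₁ hr₁ hr h_sv_a.regularlyVarying
    h_sv_a₁.regularlyVarying h_sv_b₁.regularlyVarying hfin hc₁ hρ

end
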